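/- Let 2 ≤ p < ∞, i ∈ ℕ with i ≥ 1, and s ∈ [0, i). There exists C > 0, depending only on φ, p, i, s, such that for every admissible finite collection 𝓘 = {[a_m,b_m]}_{m=1}^N and every measurable f : ℝ → ℂ for which M^{i,s}_p f is finite at at least one point, the convolutions f∗φ_m are absolutely convergent and the rotated family g = {g_m}_{m=1}^N, g_m(x) = e^{−2πi a_m x}(f∗φ_m)(x), satisfies the pointwise estimate M^{i,s}_p g (x) ≤ C · M^{i,s}_p f (x) for every x ∈ ℝ. -/

import Mathlib

open MeasureTheory Real Set Function
open scoped FourierTransform ENNReal NNReal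

/-- `e2pi t = e^{2πit}`. -/
noncomputable def e2pi (t : ℝ) : ℂ := Complex.exp (2 * (Real.pi : ℂ) * Complex.I * (t : ℂ))

/-- Convolution of two functions on `ℝ`. -/
noncomputable def conv (f g : ℝ → ℂ) (x : ℝ) : ℂ := ∫ t, f t * g (x - t)

/-- The function `φ_m` associated with the interval `[a,b]`: its Fourier transform is
`ξ ↦ 𝓕φ ((ξ - a)/(b - a))`; in space variables it is `x ↦ (b-a) e^{2πiax} φ((b-a)x)`. -/
noncomputable def phim (φ : ℝ → ℂ) (a b : ℝ) (x : ℝ) : ℂ :=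
  ((b - a : ℝ) : ℂ) * e2pi (a * x) * φ ((b - a) * x)

/-- A finite collection of compact intervals `[a m, b m]` is admissible if the intervals are
nondegenerate, pairwise disjoint, and none of them contains `0` in its interior. -/
def Admissible {N : ℕ} (a b : Fin N → ℝ) : Prop :=
  (∀ m, a m < b m) ∧ (∀ m, (0 : ℝ) ∉ Set.Ioo (a m) (b m)) ∧
    ∀ m m', m ≠ m' → Disjoint (Set.Icc (a m) (b m)) (Set.Icc (a m') (b m'))

/-- The rotated Rubio de Francia piece `g_m(x) = e^{-2πi a x} (f ∗ φ_m)(x)`. -/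
noncomputable def rotConv (φ : ℝ → ℂ) (a b : ℝ) (f : ℝ → ℂ) (x : ℝ) : ℂ :=
  e2pi (-(a * x)) * conv f (phim φ a b) x

/-- Sharp maximal function `M^{i,s}_p` of a finite family `h = {h_m}` of functions, with the
`ℓ²`-norm inside: `sup_{I ∋ x} inf_{P} |I|^{-s} ((1/|I|) ∫_I (Σ_m |h_m - P_m|²)^{p/2})^{1/p}`,
the infimum over families of polynomials of degree `< i`, with values in `[0,∞]`. -/
noncomputable def sharpMax (i : ℕ) (s p : ℝ) {N : ℕ} (h : Fin N → ℝ → ℂ) (x : ℝ) : ℝ≥0∞ :=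
  ⨆ (u : ℝ) (v : ℝ) (_ : u < v) (_ : x ∈ Set.Icc u v),
    ⨅ (P : Fin N → Polynomial ℂ) (_ : ∀ m, (P m).degree < (i : WithBot ℕ)),
      ENNReal.ofReal (v - u) ^ (-s) *
        ((ENNReal.ofReal (v - u))⁻¹ *
          ∫⁻ t in Set.Icc u v,
            ENNReal.ofReal ((∑ m, ‖h m t - (P m).eval (t : ℂ)‖ ^ 2) ^ (p / 2))) ^ (1 / p)

open MeasureTheory Real Set Function
open scoped FourierTransform ENNReal NNReal
open scoped SchwartzMap

theorem e2pi_add (s t : ℝ) : e2pi (s + t) = e2pi s * e2pi t := by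
  unfold e2pi; rw [← Complex.exp_add]; congr 1; push_cast; ring

theorem e2pi_zero : e2pi 0 = 1 := by simp [e2pi]

theorem norm_e2pi (t : ℝ) : ‖e2pi t‖ = 1 := by
  unfold e2pi
  have : 2 * (Real.pi : ℂ) * Complex.I * (t : ℂ) = ((2 * Real.pi * t : ℝ) : ℂ) * Complex.I := by
    push_cast; ring
  rw [this, Complex.norm_exp_ofReal_mul_I]

theorem e2pi_tg (a : ℝ) : (fun t : ℝ => e2pi (a * t)).HasTemperateGrowth := by
  have hid : ∀ n : ℕ, iteratedDeriv n (fun t : ℝ => e2pi (a * t)) =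
      fun t => (2 * (Real.pi : ℂ) * Complex.I * a) ^ n * e2pi (a * t) := by
    intro n
    induction n with
    | zero => simp
    | succ n ih =>
      rw [iteratedDeriv_succ, ih]
      ext t
      have h1 : HasDerivAt (fun t : ℝ => e2pi (a * t))
          (e2pi (a * t) * (2 * (Real.pi : ℂ) * Complex.I * a)) t := by
        unfold e2pi
        have : HasDerivAt (fun t : ℝ => 2 * (Real.pi : ℂ) * Complex.I * ((a * t : ℝ) : ℂ))
            (2 * (Real.pi : ℂ) * Complex.I * a) t := by
          have h := ((hasDerivAt_id t).const_mul a).ofReal_comp.const_mul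
            (2 * (Real.pi : ℂ) * Complex.I)
          simpa using h
        exact this.cexp
      rw [(h1.const_mul _).deriv]; ring
  refine ⟨?_, ?_⟩
  · unfold e2pi
    have : ContDiff ℝ (⊤ : ℕ∞) (fun t : ℝ => ((a * t : ℝ) : ℂ)) :=
      Complex.ofRealCLM.contDiff.comp (contDiff_const.mul contDiff_id)
    exact (contDiff_const.mul this).cexp
  · intro n
    refine ⟨0, ‖(2 * (Real.pi : ℂ) * Complex.I * a) ^ n‖, fun x => ?_⟩
    rw [norm_iteratedFDeriv_eq_norm_iteratedDeriv, hid, norm_mul, norm_e2pi]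
    simp

/-- dilation `y ↦ χ (ℓ y)` on Schwartz space. -/
noncomputable def dilS (χ : 𝓢(ℝ, ℂ)) (ℓ : ℝ) (hℓ : 0 < ℓ) : 𝓢(ℝ, ℂ) :=
  SchwartzMap.compCLMOfContinuousLinearEquiv ℂ
    (ContinuousLinearEquiv.unitsEquivAut ℝ (Units.mk0 ℓ hℓ.ne')) χ

/-- `y ↦ e(a y) χ(ℓ y)` as a Schwartz function -/
noncomputable def modS (χ : 𝓢(ℝ, ℂ)) (a ℓ : ℝ) (hℓ : 0 < ℓ) : 𝓢(ℝ, ℂ) :=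
  SchwartzMap.smulLeftCLM ℂ (fun t : ℝ => e2pi (a * t)) (dilS χ ℓ hℓ)

theorem modS_apply (χ : 𝓢(ℝ, ℂ)) (a ℓ : ℝ) (hℓ : 0 < ℓ) (y : ℝ) :
    modS χ a ℓ hℓ y = e2pi (a * y) * χ (ℓ * y) := by
  unfold modS dilS
  rw [SchwartzMap.smulLeftCLM_apply_apply (e2pi_tg a)]
  simp [mul_comm ℓ y]

theorem fourier_e2pi (f : ℝ → ℂ) (ξ : ℝ) : 𝓕 f ξ = ∫ y, e2pi (-(y * ξ)) * f y := by
  rw [Real.fourier_real_eq_integral_exp_smul]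
  congr 1; ext y; unfold e2pi
  rw [smul_eq_mul]; congr 2; push_cast; ring

theorem fourier_modS (χ : 𝓢(ℝ, ℂ)) (a ℓ : ℝ) (hℓ : 0 < ℓ) (ξ : ℝ) :
    𝓕 (modS χ a ℓ hℓ) ξ = (ℓ : ℂ)⁻¹ * 𝓕 χ ((ξ - a) / ℓ) := by
  rw [SchwartzMap.fourier_coe, SchwartzMap.fourier_coe, fourier_e2pi, fourier_e2pi]
  have := MeasureTheory.Measure.integral_comp_mul_left
    (fun y => e2pi (-(y * ((ξ - a) / ℓ))) * χ y) ℓ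
  rw [abs_of_pos (inv_pos.2 hℓ), Complex.real_smul, Complex.ofReal_inv] at this
  rw [← this]
  congr 1; ext y
  rw [modS_apply, ← mul_assoc, ← e2pi_add]
  congr 2; field_simp; ring

/-- Fourier transform vanishes off `(0,1)`. -/
def GoodS (χ : 𝓢(ℝ, ℂ)) : Prop := ∀ ξ : ℝ, ξ ∉ Ioo (0:ℝ) 1 → 𝓕 χ ξ = 0

/-- multiplication by the variable -/
noncomputable def mulX (χ : 𝓢(ℝ, ℂ)) : 𝓢(ℝ, ℂ) := SchwartzMap.smulLeftCLM ℂ (fun t : ℝ => t) χ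

theorem mulX_apply (χ : 𝓢(ℝ, ℂ)) (y : ℝ) : mulX χ y = y * χ y := by
  unfold mulX
  rw [SchwartzMap.smulLeftCLM_apply_apply (by fun_prop)]
  simp

theorem GoodS.mulX {χ : 𝓢(ℝ, ℂ)} (h : GoodS χ) : GoodS (mulX χ) := by
  intro ξ hξ
  have h1 : HasDerivAt (𝓕 (χ : ℝ → ℂ)) (𝓕 (fun x : ℝ => (-2 * π * Complex.I * x) • χ x) ξ) ξ := by
    refine Real.hasDerivAt_fourier χ.integrable ?_ ξ
    have := (_root_.mulX χ).integrable (μ := volume)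
    refine this.congr (Filter.Eventually.of_forall fun y => ?_)
    simp [mulX_apply]
  have h2 : 𝓕 (fun x : ℝ => (-2 * π * Complex.I * x) • χ x) ξ =
      (-2 * π * Complex.I) * 𝓕 (_root_.mulX χ) ξ := by
    rw [SchwartzMap.fourier_coe, fourier_e2pi, fourier_e2pi, ← integral_const_mul]
    congr 1; ext y; rw [mulX_apply, smul_eq_mul]; ring
  have h3 : 𝓕 (fun x : ℝ => (-2 * π * Complex.I * x) • χ x) ξ = 0 := by
    simp only [mem_Ioo, not_and_or, not_lt] at hξ
    rcases hξ with hξ | hξ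
    · have hd := h1.hasDerivWithinAt (s := Iic ξ)
      have hz : HasDerivWithinAt (𝓕 (χ : ℝ → ℂ)) 0 (Iic ξ) ξ := by
        refine (hasDerivWithinAt_const ξ (Iic ξ) (0:ℂ)).congr ?_ ?_
        · intro y hy; exact h y (fun hh => absurd hh.1 (not_lt.2 (le_trans hy hξ)))
        · exact h ξ (fun hh => absurd hh.1 (not_lt.2 hξ))
      exact (uniqueDiffWithinAt_Iic ξ).eq_deriv _ hd hz
    · have hd := h1.hasDerivWithinAt (s := Ici ξ)
      have hz : HasDerivWithinAt (𝓕 (χ : ℝ → ℂ)) 0 (Ici ξ) ξ := by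
        refine (hasDerivWithinAt_const ξ (Ici ξ) (0:ℂ)).congr ?_ ?_
        · intro y hy; exact h y (fun hh => absurd hh.2 (not_lt.2 (le_trans hξ hy)))
        · exact h ξ (fun hh => absurd hh.2 (not_lt.2 hξ))
      exact (uniqueDiffWithinAt_Ici ξ).eq_deriv _ hd hz
  rw [h2] at h3
  have : (-2 * (π:ℂ) * Complex.I) ≠ 0 := by simp [Real.pi_ne_zero]
  exact (mul_eq_zero.1 h3).resolve_left this

/-- derivative -/
noncomputable def dS (χ : 𝓢(ℝ, ℂ)) : 𝓢(ℝ, ℂ) := SchwartzMap.derivCLM ℂ ℂ χ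

theorem dS_apply (χ : 𝓢(ℝ, ℂ)) (y : ℝ) : dS χ y = deriv χ y := rfl

theorem GoodS.dS {χ : 𝓢(ℝ, ℂ)} (h : GoodS χ) : GoodS (dS χ) := by
  intro ξ hξ
  have h1 := Real.fourier_deriv (f := (χ : ℝ → ℂ)) χ.integrable χ.differentiable
    ((_root_.dS χ).integrable)
  have h2 : 𝓕 (_root_.dS χ) ξ = 𝓕 (deriv (χ : ℝ → ℂ)) ξ := rfl
  rw [h2, h1]
  have := h ξ hξ
  rw [SchwartzMap.fourier_coe] at this
  simp [this]

theorem GoodS.dS_iter {χ : 𝓢(ℝ, ℂ)} (h : GoodS χ) (n : ℕ) : GoodS (_root_.dS^[n] χ) := by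
  induction n with
  | zero => exact h
  | succ n ih => rw [Function.iterate_succ_apply']; exact ih.dS

theorem GoodS.mulX_iter {χ : 𝓢(ℝ, ℂ)} (h : GoodS χ) (n : ℕ) : GoodS (_root_.mulX^[n] χ) := by
  induction n with
  | zero => exact h
  | succ n ih => rw [Function.iterate_succ_apply']; exact ih.mulX

theorem mulX_iter_apply (χ : 𝓢(ℝ, ℂ)) (n : ℕ) (y : ℝ) : (mulX^[n] χ) y = (y:ℂ) ^ n * χ y := by
  induction n with
  | zero => simp
  | succ n ih => rw [Function.iterate_succ_apply', mulX_apply, ih]; ring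

theorem integral_modS_eq (χ : 𝓢(ℝ, ℂ)) (a ℓ : ℝ) (hℓ : 0 < ℓ) (h : GoodS χ)
    (h0 : (0:ℝ) ∉ Ioo a (a + ℓ)) : ∫ y, modS χ a ℓ hℓ y = 0 := by
  have h1 : ∫ y, modS χ a ℓ hℓ y = 𝓕 (modS χ a ℓ hℓ) 0 := by
    rw [SchwartzMap.fourier_coe, fourier_e2pi]; simp [e2pi_zero]
  rw [h1, fourier_modS, h, mul_zero]
  rintro ⟨h2, h3⟩
  apply h0
  rw [lt_div_iff₀ hℓ] at h2
  rw [div_lt_one hℓ] at h3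
  constructor <;> linarith

theorem poly_mul_modS_integrable (χ : 𝓢(ℝ, ℂ)) (a ℓ : ℝ) (hℓ : 0 < ℓ) (P : Polynomial ℂ) :
    Integrable (fun y : ℝ => P.eval (y : ℂ) * modS χ a ℓ hℓ y) := by
  simp_rw [Polynomial.eval_eq_sum_range, Finset.sum_mul]
  refine integrable_finsetSum _ fun k _ => ?_
  have := ((mulX^[k] (modS χ a ℓ hℓ)).integrable (μ := volume)).const_mul (P.coeff k)
  refine this.congr (Filter.Eventually.of_forall fun y => ?_)
  simp only [mulX_iter_apply]; ring

theorem poly_mul_modS_integral (χ : 𝓢(ℝ, ℂ)) (a ℓ : ℝ) (hℓ : 0 < ℓ) (h : GoodS χ)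
    (h0 : (0:ℝ) ∉ Ioo a (a + ℓ)) (P : Polynomial ℂ) :
    ∫ y : ℝ, P.eval (y : ℂ) * modS χ a ℓ hℓ y = 0 := by
  simp_rw [Polynomial.eval_eq_sum_range, Finset.sum_mul]
  rw [integral_finsetSum]
  · refine Finset.sum_eq_zero fun k _ => ?_
    have h1 : ∀ y : ℝ, P.coeff k * (y:ℂ) ^ k * modS χ a ℓ hℓ y =
        (P.coeff k * ((ℓ:ℂ) ^ k)⁻¹) * modS (mulX^[k] χ) a ℓ hℓ y := by
      intro y
      have : (ℓ : ℂ) ≠ 0 := by exact_mod_cast hℓ.ne'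
      rw [modS_apply, modS_apply, mulX_iter_apply]
      push_cast; rw [mul_pow]; field_simp
    simp_rw [h1]
    rw [integral_const_mul, integral_modS_eq _ _ _ _ (h.mulX_iter k) h0, mul_zero]
  · intro k _
    have := ((mulX^[k] (modS χ a ℓ hℓ)).integrable (μ := volume)).const_mul (P.coeff k)
    refine this.congr (Filter.Eventually.of_forall fun y => ?_)
    simp only [mulX_iter_apply]; ring

theorem poly_conv_modS (χ : 𝓢(ℝ, ℂ)) (a ℓ : ℝ) (hℓ : 0 < ℓ) (h : GoodS χ)
    (h0 : (0:ℝ) ∉ Ioo a (a + ℓ)) (P : Polynomial ℂ) (x : ℝ) :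
    ∫ t : ℝ, P.eval (t : ℂ) * modS χ a ℓ hℓ (x - t) = 0 := by
  have h1 := poly_mul_modS_integral χ a ℓ hℓ h h0 (P.comp (Polynomial.C (x:ℂ) - Polynomial.X))
  rw [← integral_sub_left_eq_self _ volume x] at h1
  rw [← h1]
  congr 1; ext t; simp

theorem modS_orth (χ : 𝓢(ℝ, ℂ)) (h : GoodS χ) {a ℓ a' ℓ' : ℝ} (hℓ : 0 < ℓ) (hℓ' : 0 < ℓ')
    (hd : Disjoint (Icc a (a + ℓ)) (Icc a' (a' + ℓ'))) :
    ∫ y, inner ℂ (modS χ a ℓ hℓ y) (modS χ a' ℓ' hℓ' y) = 0 := by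
  rw [← SchwartzMap.integral_inner_fourier_fourier]
  have : ∀ ξ, inner ℂ (𝓕 (modS χ a ℓ hℓ) ξ) (𝓕 (modS χ a' ℓ' hℓ') ξ) = (0:ℂ) := by
    intro ξ
    rw [fourier_modS, fourier_modS]
    by_cases h1 : (ξ - a) / ℓ ∈ Ioo (0:ℝ) 1
    · have h2 : (ξ - a') / ℓ' ∉ Ioo (0:ℝ) 1 := by
        rintro ⟨h3, h4⟩
        obtain ⟨h5, h6⟩ := h1
        rw [lt_div_iff₀ hℓ'] at h3
        rw [div_lt_one hℓ'] at h4
        rw [lt_div_iff₀ hℓ] at h5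
        rw [div_lt_one hℓ] at h6
        exact Set.disjoint_left.1 hd (show ξ ∈ Icc a (a + ℓ) from ⟨by linarith, by linarith⟩)
          ⟨by linarith, by linarith⟩
      rw [h _ h2]; simp
    · rw [h _ h1]; simp
  simp_rw [this]; simp

theorem modS_sq (χ : 𝓢(ℝ, ℂ)) {a ℓ : ℝ} (hℓ : 0 < ℓ) :
    ‖(modS χ a ℓ hℓ).toLp 2‖ ^ 2 = ℓ⁻¹ * ∫ y, ‖χ y‖ ^ 2 := by
  have h1 : ‖(modS χ a ℓ hℓ).toLp 2‖ ^ 2 = ∫ y, ‖modS χ a ℓ hℓ y‖ ^ 2 := by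
    apply Complex.ofReal_injective
    have h := SchwartzMap.inner_toL2_toL2_eq (modS χ a ℓ hℓ) (modS χ a ℓ hℓ) volume
    rw [inner_self_eq_norm_sq_to_K] at h
    simp only [inner_self_eq_norm_sq_to_K] at h
    push_cast
    rw [← integral_complex_ofReal]
    push_cast
    exact h
  rw [h1]
  have := MeasureTheory.Measure.integral_comp_mul_left (fun y => ‖χ y‖ ^ 2) ℓ
  rw [abs_of_pos (inv_pos.2 hℓ), smul_eq_mul] at this
  rw [← this]
  congr 1; ext y; rw [modS_apply, norm_mul, norm_e2pi, one_mul]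

theorem bessel_abs {E : Type*} [NormedAddCommGroup E] [InnerProductSpace ℂ E] {N : ℕ}
    (v : Fin N → E) (ℓ : Fin N → ℝ) (B : ℝ) (hB : 0 ≤ B) (hℓ : ∀ m, 0 < ℓ m)
    (ho : ∀ m n, m ≠ n → inner ℂ (v m) (v n) = (0:ℂ)) (hv : ∀ m, ‖v m‖ ^ 2 ≤ (ℓ m)⁻¹ * B) (H : E) :
    ∑ m, ℓ m * ‖(inner ℂ H (v m) : ℂ)‖ ^ 2 ≤ B * ‖H‖ ^ 2 := by
  set S := ∑ m, ℓ m * ‖(inner ℂ H (v m) : ℂ)‖ ^ 2 with hS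
  set w : E := ∑ m, ((ℓ m : ℂ) * inner ℂ (v m) H) • v m with hw
  have hS0 : 0 ≤ S := Finset.sum_nonneg fun m _ => mul_nonneg (hℓ m).le (sq_nonneg _)
  have h1 : (inner ℂ H w : ℂ) = (S : ℂ) := by
    rw [hw, inner_sum, hS]
    push_cast
    refine Finset.sum_congr rfl fun m _ => ?_
    rw [inner_smul_right, mul_assoc, ← inner_conj_symm (v m) H, mul_comm (starRingEnd ℂ _),
      RCLike.mul_conj]
    rfl
  have h2 : ‖w‖ ^ 2 = ∑ m, ‖((ℓ m : ℂ) * inner ℂ (v m) H) • v m‖ ^ 2 := by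
    have : (inner ℂ w w : ℂ) = ∑ m, (‖((ℓ m : ℂ) * inner ℂ (v m) H) • v m‖ ^ 2 : ℂ) := by
      conv_lhs => rw [hw, sum_inner]
      refine Finset.sum_congr rfl fun m _ => ?_
      rw [inner_sum, Finset.sum_eq_single m]
      · rw [inner_self_eq_norm_sq_to_K]; rfl
      · intro n _ hn
        rw [inner_smul_left, inner_smul_right, ho m n hn.symm]; simp
      · simp
    rw [inner_self_eq_norm_sq_to_K] at this
    apply Complex.ofReal_injective
    push_cast
    exact this
  have h3 : ‖w‖ ^ 2 ≤ B * S := by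
    rw [h2, hS, Finset.mul_sum]
    refine Finset.sum_le_sum fun m _ => ?_
    rw [norm_smul, norm_mul, norm_inner_symm, Complex.norm_real, Real.norm_of_nonneg (hℓ m).le,
      mul_pow, mul_pow]
    calc ℓ m ^ 2 * ‖(inner ℂ H (v m) : ℂ)‖ ^ 2 * ‖v m‖ ^ 2
        ≤ ℓ m ^ 2 * ‖(inner ℂ H (v m) : ℂ)‖ ^ 2 * ((ℓ m)⁻¹ * B) := by gcongr; exact hv m
      _ = _ := by have := (hℓ m).ne'; field_simp
  have h4 : S ≤ ‖H‖ * ‖w‖ := by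
    have := norm_inner_le_norm (𝕜 := ℂ) H w
    rw [h1, Complex.norm_real, Real.norm_of_nonneg hS0] at this
    exact this
  rcases hS0.eq_or_lt with h | h
  · rw [← h]
    positivity
  · have h5 : S ^ 2 ≤ ‖H‖ ^ 2 * (B * S) := by
      calc S ^ 2 ≤ (‖H‖ * ‖w‖) ^ 2 := by gcongr
        _ = ‖H‖ ^ 2 * ‖w‖ ^ 2 := by ring
        _ ≤ _ := by gcongr
    have : S * S ≤ (B * ‖H‖ ^ 2) * S := by nlinarith
    exact le_of_mul_le_mul_right this h

theorem bessel_conv (χ : 𝓢(ℝ, ℂ)) (h : GoodS χ) {N : ℕ} (a ℓ : Fin N → ℝ) (hℓ : ∀ m, 0 < ℓ m)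
    (hd : ∀ m n, m ≠ n → Disjoint (Icc (a m) (a m + ℓ m)) (Icc (a n) (a n + ℓ n)))
    (H : ℝ → ℂ) (hH : MemLp H 2) (x : ℝ) :
    ∑ m, ℓ m * ‖∫ t, H t * modS χ (a m) (ℓ m) (hℓ m) (x - t)‖ ^ 2
      ≤ (∫ y, ‖χ y‖ ^ 2) * ∫ t, ‖H t‖ ^ 2 := by
  have hG : MemLp (fun y => (starRingEnd ℂ) (H (x - y))) 2 := by
    have := hH.comp_measurePreserving (Measure.measurePreserving_sub_left volume x)
    exact this.star
  obtain ⟨G, hGae⟩ : ∃ G : Lp ℂ 2 (volume : Measure ℝ),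
      G =ᵐ[volume] fun y => (starRingEnd ℂ) (H (x - y)) := ⟨hG.toLp, hG.coeFn_toLp⟩
  obtain ⟨v, hv⟩ : ∃ v : Fin N → Lp ℂ 2 (volume : Measure ℝ),
      ∀ m, v m = (modS χ (a m) (ℓ m) (hℓ m)).toLp 2 := ⟨_, fun _ => rfl⟩
  have ho : ∀ m n, m ≠ n → inner ℂ (v m) (v n) = (0:ℂ) := by
    intro m n hmn
    rw [hv, hv, SchwartzMap.inner_toL2_toL2_eq _ _ volume]; exact modS_orth χ h _ _ (hd m n hmn)
  have hv2 : ∀ m, ‖v m‖ ^ 2 ≤ (ℓ m)⁻¹ * ∫ y, ‖χ y‖ ^ 2 := by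
    intro m; rw [hv]; exact (modS_sq χ (hℓ m)).le
  have hvae : ∀ m, v m =ᵐ[volume] modS χ (a m) (ℓ m) (hℓ m) := by
    intro m; rw [hv]; exact (modS χ (a m) (ℓ m) (hℓ m)).coeFn_toLp 2 volume
  have h1 := bessel_abs v ℓ (∫ y, ‖χ y‖ ^ 2)
    (integral_nonneg fun _ => sq_nonneg _) hℓ ho hv2 G
  have h2 : ∀ m, (inner ℂ G (v m) : ℂ) =
      ∫ t, H t * modS χ (a m) (ℓ m) (hℓ m) (x - t) := by
    intro m
    rw [L2.inner_def, ← integral_sub_left_eq_self _ volume x]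
    refine integral_congr_ae ?_
    have e1 := (Measure.measurePreserving_sub_left volume x).quasiMeasurePreserving.ae hGae
    have e2 := (Measure.measurePreserving_sub_left volume x).quasiMeasurePreserving.ae
      (hvae m)
    filter_upwards [e1, e2] with t ht1 ht2
    rw [ht1, ht2]
    simp [mul_comm]
  have h3 : ‖G‖ ^ 2 = ∫ t, ‖H t‖ ^ 2 := by
    have := L2.inner_def (𝕜 := ℂ) G G
    rw [inner_self_eq_norm_sq_to_K] at this
    have h5 : ∫ y, ‖H (x - y)‖ ^ 2 = ∫ t, ‖H t‖ ^ 2 :=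
      integral_sub_left_eq_self (fun t => ‖H t‖ ^ 2) volume x
    rw [← h5]
    apply Complex.ofReal_injective
    rw [← integral_complex_ofReal]
    push_cast
    refine this.trans (integral_congr_ae ?_)
    filter_upwards [hGae] with t ht
    rw [ht, inner_self_eq_norm_sq_to_K]; simp
  simp_rw [h2] at h1
  rw [h3] at h1
  exact h1

/-- convolution with a modulated Schwartz function -/
noncomputable def cv (χ : 𝓢(ℝ, ℂ)) (a ℓ : ℝ) (hℓ : 0 < ℓ) (f : ℝ → ℂ) (x : ℝ) : ℂ :=
  ∫ t, f t * modS χ a ℓ hℓ (x - t)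

theorem cv_schwartz (χ : 𝓢(ℝ, ℂ)) (a ℓ : ℝ) (hℓ : 0 < ℓ) (f : 𝓢(ℝ, ℂ)) :
    ∃ g : 𝓢(ℝ, ℂ), (∀ x, g x = cv χ a ℓ hℓ f x) ∧
      ∀ ξ, 𝓕 g ξ = 𝓕 f ξ * ((ℓ : ℂ)⁻¹ * 𝓕 χ ((ξ - a) / ℓ)) := by
  refine ⟨SchwartzMap.convolution (ContinuousLinearMap.mul ℂ ℂ) f (modS χ a ℓ hℓ), ?_, ?_⟩
  · intro x
    rw [SchwartzMap.convolution_apply]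
    rfl
  · intro ξ
    have := SchwartzMap.fourier_convolution (ContinuousLinearMap.mul ℂ ℂ) f (modS χ a ℓ hℓ)
    rw [this, ← fourier_modS χ a ℓ hℓ]
    rfl

theorem l2_schwartz (χ : 𝓢(ℝ, ℂ)) (h : GoodS χ) {N : ℕ} (a ℓ : Fin N → ℝ) (hℓ : ∀ m, 0 < ℓ m)
    (hd : ∀ m n, m ≠ n → Disjoint (Icc (a m) (a m + ℓ m)) (Icc (a n) (a n + ℓ n)))
    (B : ℝ) (hB : ∀ ξ, ‖𝓕 χ ξ‖ ≤ B) (f : 𝓢(ℝ, ℂ)) :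
    ∑ m, ∫ x, ‖ℓ m * cv χ (a m) (ℓ m) (hℓ m) f x‖ ^ 2 ≤ B ^ 2 * ∫ x, ‖f x‖ ^ 2 := by
  choose g hg1 hg2 using fun m => cv_schwartz χ (a m) (ℓ m) (hℓ m) f
  have hB0 : 0 ≤ B := (norm_nonneg _).trans (hB 0)
  have h1 : ∀ m, ∫ x, ‖ℓ m * cv χ (a m) (ℓ m) (hℓ m) f x‖ ^ 2 =
      ∫ ξ, ‖𝓕 f ξ‖ ^ 2 * ‖𝓕 χ ((ξ - a m) / ℓ m)‖ ^ 2 := by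
    intro m
    simp_rw [← hg1 m, norm_mul, mul_pow]
    rw [integral_const_mul, ← SchwartzMap.integral_norm_sq_fourier, ← integral_const_mul]
    congr 1; ext ξ
    rw [hg2, norm_mul, norm_mul, mul_pow, mul_pow, norm_inv, inv_pow]
    have : ‖(ℓ m : ℂ)‖ ≠ 0 := by simpa using (hℓ m).ne'
    field_simp
  simp_rw [h1]
  have hIntg : Integrable (fun ξ => ‖𝓕 f ξ‖ ^ 2) := by
    have := ((𝓕 f).memLp 2 volume).integrable_norm_pow (by norm_num)
    simpa using this
  have hIntg2 : ∀ m ∈ Finset.univ, Integrable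
      (fun ξ => ‖𝓕 f ξ‖ ^ 2 * ‖𝓕 χ ((ξ - a m) / ℓ m)‖ ^ 2) := by
    intro m _
    refine hIntg.mul_bdd (c := B ^ 2) ?_ ?_
    · have : Continuous (fun ξ => 𝓕 χ ξ) := (𝓕 χ).continuous
      exact (Continuous.pow (by fun_prop) 2).aestronglyMeasurable
    · refine Filter.Eventually.of_forall fun ξ => ?_
      rw [norm_pow, norm_norm]
      gcongr; exact hB _
  rw [← integral_finsetSum _ hIntg2, ← SchwartzMap.integral_norm_sq_fourier, ← integral_const_mul]
  refine integral_mono (integrable_finsetSum _ hIntg2) (hIntg.const_mul _) fun ξ => ?_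
  show ∑ m, ‖𝓕 f ξ‖ ^ 2 * ‖𝓕 χ ((ξ - a m) / ℓ m)‖ ^ 2 ≤ _
  rw [← Finset.mul_sum, mul_comm]
  gcongr
  by_cases hx : ∃ m, (ξ - a m) / ℓ m ∈ Ioo (0:ℝ) 1
  · obtain ⟨m, hm⟩ := hx
    rw [Finset.sum_eq_single m]
    · gcongr; exact hB _
    · intro n _ hn
      rw [h]; · simp
      rintro ⟨h3, h4⟩
      obtain ⟨h5, h6⟩ := hm
      rw [lt_div_iff₀ (hℓ _)] at h3 h5
      rw [div_lt_one (hℓ _)] at h4 h6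
      exact Set.disjoint_left.1 (hd n m hn)
        (show ξ ∈ Icc (a n) (a n + ℓ n) from ⟨by linarith, by linarith⟩)
        ⟨by linarith, by linarith⟩
    · simp
  · push Not at hx
    rw [Finset.sum_eq_zero]; · positivity
    intro m _; rw [h _ (hx m)]; simp

theorem memLp_mul_modS_integrable (χ : 𝓢(ℝ, ℂ)) (a ℓ : ℝ) (hℓ : 0 < ℓ) (H : ℝ → ℂ)
    (hH : MemLp H 2) (x : ℝ) : Integrable fun t => H t * modS χ a ℓ hℓ (x - t) := by
  have h2 : MemLp (fun t => modS χ a ℓ hℓ (x - t)) 2 :=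
    ((modS χ a ℓ hℓ).memLp 2 volume).comp_measurePreserving
      (Measure.measurePreserving_sub_left volume x)
  exact hH.integrable_mul h2

theorem l2_general (χ : 𝓢(ℝ, ℂ)) (h : GoodS χ) {N : ℕ} (a ℓ : Fin N → ℝ) (hℓ : ∀ m, 0 < ℓ m)
    (hd : ∀ m n, m ≠ n → Disjoint (Icc (a m) (a m + ℓ m)) (Icc (a n) (a n + ℓ n)))
    (B : ℝ) (hB : ∀ ξ, ‖𝓕 χ ξ‖ ≤ B) (f : ℝ → ℂ) (hf : MemLp f 2) :
    ∫⁻ x, ∑ m, ‖ℓ m * cv χ (a m) (ℓ m) (hℓ m) f x‖ₑ ^ 2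
      ≤ ENNReal.ofReal (B ^ 2) * ∫⁻ x, ‖f x‖ₑ ^ 2 := by
  -- approximating sequence
  have hdense := SchwartzMap.denseRange_toLpCLM (E := ℝ) (F := ℂ) (p := 2)
    (μ := volume) (by norm_num)
  have hmem : (hf.toLp) ∈ closure (range (SchwartzMap.toLpCLM ℝ (E := ℝ) ℂ 2 volume)) :=
    hdense _
  obtain ⟨u, hu, hlim⟩ := mem_closure_iff_seq_limit.1 hmem
  choose F hF using hu
  have hFn : ∀ n, MemLp (F n : ℝ → ℂ) 2 := fun n => (F n).memLp 2 volume
  have hl : Filter.Tendsto (fun n => eLpNorm (fun x => F n x - f x) 2 volume) Filter.atTop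
      (nhds 0) := by
    have h1 := (Lp.tendsto_Lp_iff_tendsto_eLpNorm' (fun n => (hFn n).toLp) hf.toLp).1 (by
      convert hlim using 2 with n
      exact hF _)
    refine h1.congr fun n => eLpNorm_congr_ae ?_
    filter_upwards [(hFn n).coeFn_toLp, hf.coeFn_toLp] with x hx1 hx2
    simp [hx1, hx2]
  have hsq : ∀ g : ℝ → ℂ, ∫⁻ x, ‖g x‖ₑ ^ 2 = eLpNorm g 2 volume ^ 2 := by
    intro g
    have := eLpNorm_nnreal_pow_eq_lintegral (f := g) (μ := (volume : Measure ℝ)) (p := 2) (by norm_num)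
    simp at this
    exact_mod_cast this.symm
  have hptw : ∀ m x, Filter.Tendsto (fun n => cv χ (a m) (ℓ m) (hℓ m) (F n) x) Filter.atTop
      (nhds (cv χ (a m) (ℓ m) (hℓ m) f x)) := by
    intro m x
    rw [tendsto_iff_norm_sub_tendsto_zero]
    have hb : ∀ n, ‖cv χ (a m) (ℓ m) (hℓ m) (F n) x - cv χ (a m) (ℓ m) (hℓ m) f x‖ ≤
        (eLpNorm (fun x => F n x - f x) 2 volume).toReal *
        (eLpNorm (fun t => modS χ (a m) (ℓ m) (hℓ m) (x - t)) 2 volume).toReal := by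
      intro n
      unfold cv
      rw [← integral_sub (memLp_mul_modS_integrable χ _ _ _ _ (hFn n) x)
        (memLp_mul_modS_integrable χ _ _ _ _ hf x)]
      have hK : MemLp (fun t => modS χ (a m) (ℓ m) (hℓ m) (x - t)) 2 :=
        ((modS χ (a m) (ℓ m) (hℓ m)).memLp 2 volume).comp_measurePreserving
          (Measure.measurePreserving_sub_left volume x)
      have hD : MemLp (fun x => F n x - f x) 2 := (hFn n).sub hf
      rw [← ENNReal.toReal_mul]
      refine le_trans ?_ (ENNReal.toReal_mono (ENNReal.mul_ne_top hD.2.ne hK.2.ne)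
        (eLpNorm_smul_le_mul_eLpNorm (p := 2) (q := 2) (r := 1) hK.1 hD.1))
      rw [eLpNorm_one_eq_lintegral_enorm]
      refine (norm_integral_le_lintegral_norm _).trans (le_of_eq ?_)
      congr 1
      refine lintegral_congr fun t => ?_
      rw [ofReal_norm]; simp [sub_mul]
    have hl2 : Filter.Tendsto (fun n => (eLpNorm (fun x => F n x - f x) 2 volume).toReal *
        (eLpNorm (fun t => modS χ (a m) (ℓ m) (hℓ m) (x - t)) 2 volume).toReal) Filter.atTop
        (nhds 0) := by
      have := (ENNReal.tendsto_toReal ENNReal.zero_ne_top).comp hl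
      simpa using this.mul_const _
    exact squeeze_zero (fun _ => norm_nonneg _) hb hl2
  have hsch : ∀ n, ∫⁻ x, ∑ m, ‖ℓ m * cv χ (a m) (ℓ m) (hℓ m) (F n) x‖ₑ ^ 2 ≤
      ENNReal.ofReal (B ^ 2) * ∫⁻ x, ‖F n x‖ₑ ^ 2 := by
    intro n
    have h1 := l2_schwartz χ h a ℓ hℓ hd B hB (F n)
    have hconv : ∀ (g : 𝓢(ℝ, ℂ)), ∫⁻ x, ‖g x‖ₑ ^ 2 = ENNReal.ofReal (∫ x, ‖g x‖ ^ 2) := by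
      intro g
      rw [ofReal_integral_eq_lintegral_ofReal]
      · refine lintegral_congr fun x => ?_
        rw [ENNReal.ofReal_pow (norm_nonneg _), ofReal_norm]
      · simpa using (g.memLp 2 volume).integrable_norm_pow (by norm_num)
      · exact Filter.Eventually.of_forall fun x => sq_nonneg _
    choose g hg1 hg2 using fun m => cv_schwartz χ (a m) (ℓ m) (hℓ m) (F n)
    simp_rw [← hg1] at h1 ⊢
    have hg3 : ∀ m x, (ℓ m : ℂ) * g m x = ((ℓ m : ℂ) • g m) x := fun m x => rfl
    simp_rw [hg3] at h1 ⊢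
    rw [lintegral_finsetSum]
    · simp_rw [hconv]
      rw [← ENNReal.ofReal_sum_of_nonneg (fun m _ => integral_nonneg fun x => sq_nonneg _),
        ← ENNReal.ofReal_mul (sq_nonneg _)]
      exact ENNReal.ofReal_le_ofReal h1
    · intro m _
      exact ((((ℓ m : ℂ) • g m).continuous).measurable.enorm).pow_const 2
  have hliminf : ∀ x, ∑ m, ‖ℓ m * cv χ (a m) (ℓ m) (hℓ m) f x‖ₑ ^ 2 =
      Filter.liminf (fun n => ∑ m, ‖ℓ m * cv χ (a m) (ℓ m) (hℓ m) (F n) x‖ₑ ^ 2) Filter.atTop := by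
    intro x
    refine (Filter.Tendsto.liminf_eq ?_).symm
    refine tendsto_finsetSum _ fun m _ => ?_
    have := ((hptw m x).const_mul (ℓ m : ℂ)).enorm
    exact ((ENNReal.continuous_pow 2).tendsto _).comp this
  simp_rw [hliminf]
  refine (lintegral_liminf_le fun n => ?_).trans ?_
  · choose g hg1 hg2 using fun m => cv_schwartz χ (a m) (ℓ m) (hℓ m) (F n)
    simp_rw [← hg1]
    refine Finset.measurable_sum _ fun m _ => ?_
    exact ((((g m).continuous).measurable.const_mul _).enorm).pow_const 2
  · have hlim2 : Filter.Tendsto (fun n => ENNReal.ofReal (B ^ 2) * ∫⁻ x, ‖F n x‖ₑ ^ 2) Filter.atTop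
        (nhds (ENNReal.ofReal (B ^ 2) * ∫⁻ x, ‖f x‖ₑ ^ 2)) := by
      simp_rw [hsq]
      refine ENNReal.Tendsto.const_mul ?_ (Or.inr ENNReal.ofReal_ne_top)
      refine ((ENNReal.continuous_pow 2).tendsto _).comp ?_
      have hcont := (continuous_enorm (E := Lp ℂ 2 (volume : Measure ℝ))).tendsto (hf.toLp)
      have h3 := hcont.comp hlim
      have e1 : ‖hf.toLp‖ₑ = eLpNorm f 2 volume := by
        rw [Lp.enorm_toLp]
      rw [e1] at h3
      refine h3.congr fun n => ?_
      show ‖u n‖ₑ = _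
      rw [← hF n]
      exact Lp.enorm_toLp (hFn n)
    refine le_trans (Filter.liminf_le_liminf (Filter.Eventually.of_forall hsch)) ?_
    exact hlim2.liminf_eq.le

/-- polynomially weighted integrability -/
def Tame (h : ℝ → ℂ) : Prop :=
  Measurable h ∧ ∃ M : ℕ, Integrable (fun t : ℝ => ‖h t‖ * ((1 + |t|) ^ M)⁻¹)

theorem schwartz_bound (ψ : 𝓢(ℝ, ℂ)) (M : ℕ) (R : ℝ) (hR : 0 ≤ R) :
    ∃ C : ℝ, 0 < C ∧ ∀ y, |y| ≤ R → ∀ t, ‖ψ (y - t)‖ ≤ C * ((1 + |t|) ^ M)⁻¹ := by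
  obtain ⟨C0, hC0, h0⟩ := ψ.decay 0 0
  obtain ⟨C1, hC1, h1⟩ := ψ.decay M 0
  simp only [norm_iteratedFDeriv_zero, pow_zero, one_mul] at h0 h1
  refine ⟨(1 + R) ^ M * (2 ^ M * (C0 + C1)), by positivity, fun y hy t => ?_⟩
  have hz : (1 + |y - t|) ^ M * ‖ψ (y - t)‖ ≤ 2 ^ M * (C0 + C1) := by
    have h2 : (1 + |y - t|) ^ M ≤ 2 ^ M * (1 + |y - t| ^ M) := by
      rcases le_total 1 |y - t| with h | h
      · calc (1 + |y - t|) ^ M ≤ (2 * |y - t|) ^ M := by gcongr; linarith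
          _ = 2 ^ M * |y - t| ^ M := mul_pow _ _ _
          _ ≤ _ := by gcongr; linarith
      · calc (1 + |y - t|) ^ M ≤ 2 ^ M := by gcongr; linarith
          _ ≤ _ := by
            have : (0:ℝ) ≤ |y - t| ^ M := by positivity
            nlinarith [show (0:ℝ) < 2 ^ M by positivity]
    calc _ ≤ 2 ^ M * (1 + |y - t| ^ M) * ‖ψ (y - t)‖ := by gcongr
      _ = 2 ^ M * (‖ψ (y - t)‖ + |y - t| ^ M * ‖ψ (y - t)‖) := by ring
      _ ≤ _ := by gcongr; exacts [h0 _, h1 _]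
  have ht : 1 + |t| ≤ (1 + R) * (1 + |y - t|) := by
    have : |t| ≤ |y| + |y - t| := by
      have := abs_sub_abs_le_abs_sub t y
      rw [abs_sub_comm t y] at this; linarith
    nlinarith [abs_nonneg (y - t)]
  rw [← div_eq_mul_inv, le_div_iff₀ (by positivity)]
  calc ‖ψ (y - t)‖ * (1 + |t|) ^ M ≤ ‖ψ (y - t)‖ * ((1 + R) * (1 + |y - t|)) ^ M := by gcongr
    _ = (1 + R) ^ M * ((1 + |y - t|) ^ M * ‖ψ (y - t)‖) := by rw [mul_pow]; ring
    _ ≤ _ := by gcongr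

theorem Tame.integrable {h : ℝ → ℂ} (hh : Tame h) (ψ : 𝓢(ℝ, ℂ)) (x : ℝ) :
    Integrable (fun t => h t * ψ (x - t)) := by
  obtain ⟨hm, M, hM⟩ := hh
  obtain ⟨C, hC, hb⟩ := schwartz_bound ψ M |x| (abs_nonneg x)
  refine (hM.const_mul C).mono' ?_ (Filter.Eventually.of_forall fun t => ?_)
  · exact hm.aestronglyMeasurable.mul
      (ψ.continuous.comp (continuous_const.sub continuous_id)).aestronglyMeasurable
  · rw [norm_mul]
    calc _ ≤ ‖h t‖ * (C * ((1 + |t|) ^ M)⁻¹) := by gcongr; exact hb x le_rfl t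
      _ = _ := by ring

theorem Tame.hasDerivAt {h : ℝ → ℂ} (hh : Tame h) (ψ : 𝓢(ℝ, ℂ)) (x : ℝ) :
    HasDerivAt (fun x => ∫ t, h t * ψ (x - t)) (∫ t, h t * dS ψ (x - t)) x := by
  have hIntg := hh.integrable ψ
  have hIntg' := hh.integrable (dS ψ)
  obtain ⟨hm, M, hM⟩ := hh
  obtain ⟨C, hC, hb⟩ := schwartz_bound (dS ψ) M (|x| + 1) (by positivity)
  refine (hasDerivAt_integral_of_dominated_loc_of_deriv_le (μ := volume)
    (F := fun x t => h t * ψ (x - t)) (F' := fun x t => h t * dS ψ (x - t))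
    (bound := fun t => C * (‖h t‖ * ((1 + |t|) ^ M)⁻¹)) (s := Metric.ball x 1)
    (Metric.ball_mem_nhds x one_pos) ?_ (hIntg x) (hIntg' x).1 ?_ (hM.const_mul C) ?_).2
  · exact Filter.Eventually.of_forall fun y => (hIntg y).1
  · refine Filter.Eventually.of_forall fun t y hy => ?_
    have hy' : |y| ≤ |x| + 1 := by
      rw [Metric.mem_ball, Real.dist_eq] at hy
      have := abs_sub_abs_le_abs_sub y x
      linarith
    show ‖h t * dS ψ (y - t)‖ ≤ _
    rw [norm_mul]
    calc _ ≤ ‖h t‖ * (C * ((1 + |t|) ^ M)⁻¹) := by gcongr; exact hb y hy' t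
      _ = _ := by ring
  · refine Filter.Eventually.of_forall fun t y _ => ?_
    have h1 : HasDerivAt (fun y => ψ (y - t)) (deriv ψ (y - t)) y := by
      have := (ψ.hasDerivAt (y - t)).comp_sub_const y t
      exact this
    exact h1.const_mul (h t)

theorem Tame.mul_bdd {h g : ℝ → ℂ} (hh : Tame h) (hg : Measurable g) (hb : ∀ t, ‖g t‖ ≤ 1) :
    Tame (fun t => h t * g t) := by
  obtain ⟨hm, M, hM⟩ := hh
  refine ⟨hm.mul hg, M, hM.mono' ?_ (Filter.Eventually.of_forall fun t => ?_)⟩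
  · have : Measurable fun t : ℝ => ((1 + |t|) ^ M)⁻¹ := by fun_prop
    exact ((hm.mul hg).norm.mul this).aestronglyMeasurable
  · rw [norm_mul, norm_norm, norm_mul, Real.norm_of_nonneg (by positivity : (0:ℝ) ≤ ((1 + |t|) ^ M)⁻¹)]
    gcongr
    nlinarith [norm_nonneg (h t), hb t]

theorem Tame.indicator {h : ℝ → ℂ} (hh : Tame h) {s : Set ℝ} (hs : MeasurableSet s) :
    Tame (s.indicator h) := by
  have := hh.mul_bdd (g := s.indicator 1) (measurable_one.indicator hs) (fun t => by
    by_cases ht : t ∈ s <;> simp [ht])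
  convert this using 2 with t
  by_cases ht : t ∈ s <;> simp [ht]

theorem Tame.add {h g : ℝ → ℂ} (hh : Tame h) (hg : Tame g) : Tame (fun t => h t + g t) := by
  obtain ⟨hm, M, hM⟩ := hh
  obtain ⟨gm, M', hM'⟩ := hg
  refine ⟨hm.add gm, max M M', (hM.add hM').mono' ?_ (Filter.Eventually.of_forall fun t => ?_)⟩
  · have : Measurable fun t : ℝ => ((1 + |t|) ^ (max M M'))⁻¹ := by fun_prop
    exact ((hm.add gm).norm.mul this).aestronglyMeasurable
  · have h1 : (1:ℝ) ≤ 1 + |t| := by linarith [abs_nonneg t]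
    rw [norm_mul, norm_norm, Real.norm_of_nonneg (by positivity : (0:ℝ) ≤ ((1 + |t|) ^ (max M M'))⁻¹)]
    calc _ ≤ (‖h t‖ + ‖g t‖) * ((1 + |t|) ^ (max M M'))⁻¹ := by gcongr; exact norm_add_le _ _
      _ = ‖h t‖ * ((1 + |t|) ^ (max M M'))⁻¹ + ‖g t‖ * ((1 + |t|) ^ (max M M'))⁻¹ := by ring
      _ ≤ ‖h t‖ * ((1 + |t|) ^ M)⁻¹ + ‖g t‖ * ((1 + |t|) ^ M')⁻¹ := by
        gcongr
        · exact le_max_left _ _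
        · exact le_max_right _ _

/-- a measurable integrable function is tame -/
theorem Tame.of_integrable {h : ℝ → ℂ} (hm : Measurable h) (hi : Integrable h) : Tame h :=
  ⟨hm, 0, by simpa using hi.norm⟩

theorem e2pi_measurable : Measurable e2pi := by unfold e2pi; fun_prop

/-- Taylor polynomial approximation for a vector valued function with given derivatives. -/
theorem taylor_poly {N : ℕ} (V : ℕ → ℝ → EuclideanSpace ℂ (Fin N))
    (hV : ∀ n x, HasDerivAt (V n) (V (n + 1) x) x) (i : ℕ) (hi : 1 ≤ i) (u v A : ℝ) (huv : u ≤ v)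
    (hA : ∀ y ∈ Icc u v, ‖V i y‖ ≤ A) :
    ∃ P : Fin N → Polynomial ℂ, (∀ m, (P m).degree < (i : WithBot ℕ)) ∧
      ∀ x ∈ Icc u v, ‖V 0 x - WithLp.toLp 2 (fun m => (P m).eval (x : ℂ))‖ ≤ A * (v - u) ^ i := by
  obtain ⟨n, rfl⟩ : ∃ n, i = n + 1 := ⟨i - 1, by omega⟩
  rcases huv.eq_or_lt with rfl | huv
  · refine ⟨fun m => Polynomial.C (V 0 u m), fun m => ?_, ?_⟩
    · refine Polynomial.degree_C_le.trans_lt ?_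
      exact_mod_cast Nat.succ_pos n
    · intro x hx
      simp only [Icc_self, mem_singleton_iff] at hx
      subst hx
      simp
  have hit : ∀ k, iteratedDeriv k (V 0) = V k := by
    intro k
    induction k with
    | zero => simp
    | succ k ih => rw [iteratedDeriv_succ, ih]; ext1 x; exact (hV k x).deriv
  have hcd : ContDiff ℝ (n + 1 : ℕ) (V 0) := by
    rw [contDiff_nat_iff_iteratedDeriv]
    constructor
    · intro k _; rw [hit]; exact continuous_iff_continuousAt.2 fun x => (hV k x).continuousAt
    · intro k _; rw [hit]; exact fun x => (hV k x).differentiableAt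
  have hw : ∀ k ≤ n + 1, ∀ y ∈ Icc u v, iteratedDerivWithin k (V 0) (Icc u v) y = V k y := by
    intro k hk y hy
    rw [iteratedDerivWithin_eq_iteratedDeriv (uniqueDiffOn_Icc huv) ?_ hy, hit]
    exact (hcd.of_le (by exact_mod_cast hk)).contDiffAt
  refine ⟨fun m => ∑ k ∈ Finset.range (n + 1),
    Polynomial.C (((k.factorial : ℂ)⁻¹) * V k u m) * (Polynomial.X - Polynomial.C (u : ℂ)) ^ k, ?_, ?_⟩
  · intro m
    refine (Polynomial.degree_sum_le _ _).trans_lt ?_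
    rw [Finset.sup_lt_iff (WithBot.bot_lt_coe _)]
    intro k hk
    refine ((Polynomial.degree_mul_le _ _).trans (add_le_add_left Polynomial.degree_C_le _)).trans_lt ?_
    rw [zero_add]
    rw [Polynomial.degree_pow, Polynomial.degree_X_sub_C]
    simp only [Finset.mem_range] at hk
    simp only [nsmul_eq_mul, mul_one]
    exact_mod_cast hk
  · intro x hx
    have h1 := taylor_mean_remainder_bound (f := V 0) (n := n) (C := A) huv.le
      (by exact_mod_cast hcd.contDiffOn) hx (fun y hy => by rw [hw _ le_rfl y hy]; exact hA y hy)
    have h2 : taylorWithinEval (V 0) n (Icc u v) u x = WithLp.toLp 2 (fun m =>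
        (∑ k ∈ Finset.range (n + 1), Polynomial.C (((k.factorial : ℂ)⁻¹) * V k u m) *
          (Polynomial.X - Polynomial.C (u : ℂ)) ^ k).eval (x : ℂ)) := by
      rw [taylor_within_apply]
      ext m
      simp only [Polynomial.eval_finsetSum, Polynomial.eval_mul, Polynomial.eval_C,
        Polynomial.eval_pow, Polynomial.eval_sub, Polynomial.eval_X]
      rw [WithLp.ofLp_sum, Finset.sum_apply]
      refine Finset.sum_congr rfl fun k hk => ?_
      simp only [Finset.mem_range] at hk
      rw [hw k (by omega) u ⟨le_rfl, huv.le⟩]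
      simp only [PiLp.smul_apply, Complex.real_smul]
      push_cast; ring
    rw [h2] at h1
    refine h1.trans ?_
    have hA0 : 0 ≤ A := (norm_nonneg _).trans (hA u ⟨le_rfl, huv.le⟩)
    have : (1:ℝ) ≤ (n.factorial : ℝ) := by exact_mod_cast Nat.succ_le_of_lt (Nat.factorial_pos n)
    have hxu : 0 ≤ x - u := by linarith [hx.1]
    have hxv : x - u ≤ v - u := by linarith [hx.2]
    calc _ ≤ A * (x - u) ^ (n + 1) := div_le_self (by positivity) this
      _ ≤ _ := by gcongr

theorem dilS_apply (χ : 𝓢(ℝ, ℂ)) (ℓ : ℝ) (hℓ : 0 < ℓ) (y : ℝ) : dilS χ ℓ hℓ y = χ (ℓ * y) := by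
  unfold dilS; simp [mul_comm ℓ y]

/-- kernels -/
noncomputable def kerS (φ : 𝓢(ℝ, ℂ)) (ℓ : ℝ) (hℓ : 0 < ℓ) (n : ℕ) : 𝓢(ℝ, ℂ) :=
  ((ℓ : ℂ) ^ (n + 1)) • dilS (dS^[n] φ) ℓ hℓ

theorem kerS_apply (φ : 𝓢(ℝ, ℂ)) (ℓ : ℝ) (hℓ : 0 < ℓ) (n : ℕ) (y : ℝ) :
    kerS φ ℓ hℓ n y = (ℓ : ℂ) ^ (n + 1) * (dS^[n] φ) (ℓ * y) := by
  unfold kerS; rw [smul_apply, dilS_apply, smul_eq_mul]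

theorem dS_kerS (φ : 𝓢(ℝ, ℂ)) (ℓ : ℝ) (hℓ : 0 < ℓ) (n : ℕ) :
    dS (kerS φ ℓ hℓ n) = kerS φ ℓ hℓ (n + 1) := by
  ext y
  rw [dS_apply]
  have h1 : HasDerivAt (fun y : ℝ => (ℓ : ℂ) ^ (n + 1) * (dS^[n] φ) (ℓ * y))
      ((ℓ : ℂ) ^ (n + 1) * (ℓ • deriv (dS^[n] φ) (ℓ * y))) y := by
    refine HasDerivAt.const_mul _ ?_
    have h2 : HasDerivAt (fun y : ℝ => ℓ * y) ℓ y := by simpa using (hasDerivAt_id y).const_mul ℓ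
    exact ((dS^[n] φ).hasDerivAt (ℓ * y)).scomp y h2
  have h3 : (kerS φ ℓ hℓ n : ℝ → ℂ) = fun y : ℝ => (ℓ : ℂ) ^ (n + 1) * (dS^[n] φ) (ℓ * y) := by
    ext y; exact kerS_apply _ _ _ _ _
  rw [h3, h1.deriv, kerS_apply, Function.iterate_succ_apply', dS_apply, Complex.real_smul]
  ring

/-- the vector valued operator and its derivatives -/
noncomputable def Vop (φ : 𝓢(ℝ, ℂ)) {N : ℕ} (a ℓ : Fin N → ℝ) (hℓ : ∀ m, 0 < ℓ m) (h : ℝ → ℂ) (n : ℕ)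
    (x : ℝ) : EuclideanSpace ℂ (Fin N) :=
  WithLp.toLp 2 fun m => ∫ t, (h t * e2pi (-(a m * t))) * kerS φ (ℓ m) (hℓ m) n (x - t)

theorem Tame.mul_e {h : ℝ → ℂ} (hh : Tame h) (a : ℝ) : Tame (fun t => h t * e2pi (-(a * t))) :=
  hh.mul_bdd (e2pi_measurable.comp (by fun_prop)) fun t => (norm_e2pi _).le

theorem Vop_hasDerivAt (φ : 𝓢(ℝ, ℂ)) {N : ℕ} (a ℓ : Fin N → ℝ) (hℓ : ∀ m, 0 < ℓ m) {h : ℝ → ℂ}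
    (hh : Tame h) (n : ℕ) (x : ℝ) :
    HasDerivAt (Vop φ a ℓ hℓ h n) (Vop φ a ℓ hℓ h (n + 1) x) x := by
  have h1 : HasDerivAt (fun x => fun m => ∫ t, (h t * e2pi (-(a m * t))) * kerS φ (ℓ m) (hℓ m) n (x - t))
      (fun m => ∫ t, (h t * e2pi (-(a m * t))) * kerS φ (ℓ m) (hℓ m) (n + 1) (x - t)) x := by
    rw [hasDerivAt_pi]
    intro m
    rw [← dS_kerS]
    exact (hh.mul_e (a m)).hasDerivAt _ x
  exact (PiLp.continuousLinearEquiv 2 ℝ (fun _ : Fin N => ℂ)).symm.toContinuousLinearMap.hasFDerivAt.comp_hasDerivAt x h1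

theorem Vop_add (φ : 𝓢(ℝ, ℂ)) {N : ℕ} (a ℓ : Fin N → ℝ) (hℓ : ∀ m, 0 < ℓ m) {h g : ℝ → ℂ}
    (hh : Tame h) (hg : Tame g) (n : ℕ) (x : ℝ) :
    Vop φ a ℓ hℓ (fun t => h t + g t) n x = Vop φ a ℓ hℓ h n x + Vop φ a ℓ hℓ g n x := by
  ext m
  simp only [Vop, PiLp.add_apply]
  rw [← integral_add ((hh.mul_e (a m)).integrable _ x) ((hg.mul_e (a m)).integrable _ x)]
  congr 1; ext t; ring

theorem Vop_coord (φ : 𝓢(ℝ, ℂ)) {N : ℕ} (a ℓ : Fin N → ℝ) (hℓ : ∀ m, 0 < ℓ m) (h : ℝ → ℂ)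
    (n : ℕ) (x : ℝ) (m : Fin N) :
    Vop φ a ℓ hℓ h n x m = e2pi (-(a m * x)) *
      ((ℓ m : ℂ) ^ (n + 1) * cv (dS^[n] φ) (a m) (ℓ m) (hℓ m) h x) := by
  simp only [Vop, cv]
  rw [← integral_const_mul, ← integral_const_mul]
  congr 1; ext t
  rw [kerS_apply, modS_apply, show -(a m * t) = -(a m * x) + a m * (x - t) by ring, e2pi_add]
  ring

/-- pointwise estimate for functions supported far from `x` -/
theorem annulus (φ : 𝓢(ℝ, ℂ)) (hφ : GoodS φ) (n : ℕ) : ∃ C : ℝ, 0 < C ∧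
    ∀ (N : ℕ) (a ℓ : Fin N → ℝ) (hℓ : ∀ m, 0 < ℓ m)
    (_ : ∀ m n, m ≠ n → Disjoint (Icc (a m) (a m + ℓ m)) (Icc (a n) (a n + ℓ n)))
    (h : ℝ → ℂ) (_ : MemLp h 2) (x ρ : ℝ) (_ : 0 < ρ) (_ : ∀ t, |x - t| < ρ → h t = 0),
    ‖Vop φ a ℓ hℓ h n x‖ ^ 2 ≤ C * (ρ ^ (2 * n + 1))⁻¹ * ∫ t, ‖h t‖ ^ 2 := by
  set χ := dS^[n] φ with hχ
  set C1 := ∫ y, ‖(mulX^[n] χ) y‖ ^ 2 with hC1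
  set C2 := ∫ y, ‖(mulX^[n+1] χ) y‖ ^ 2 with hC2
  have hC10 : 0 ≤ C1 := integral_nonneg fun _ => by positivity
  have hC20 : 0 ≤ C2 := integral_nonneg fun _ => by positivity
  refine ⟨C1 + C2 + 1, by positivity, ?_⟩
  intro N a ℓ hℓ hd h hh x ρ hρ hsupp
  set J := ∫ t, ‖h t‖ ^ 2 with hJ
  have hJ0 : 0 ≤ J := integral_nonneg fun _ => by positivity
  have key : ∀ M : ℕ, ∑ m, ℓ m * (((ℓ m) ^ M) * ‖cv χ (a m) (ℓ m) (hℓ m) h x‖) ^ 2 ≤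
      (∫ y, ‖(mulX^[M] χ) y‖ ^ 2) * ((ρ ^ (2 * M))⁻¹ * J) := by
    intro M
    set H : ℝ → ℂ := fun t => h t * (((x - t : ℝ) : ℂ) ^ M)⁻¹ with hH
    have hHb : ∀ t, ‖H t‖ ≤ (ρ ^ M)⁻¹ * ‖h t‖ := by
      intro t
      simp only [hH, norm_mul, norm_inv, norm_pow, Complex.norm_real, Real.norm_eq_abs]
      rcases lt_or_ge |x - t| ρ with h1 | h1
      · simp [hsupp t h1]
      · rw [mul_comm]; gcongr
    have hHm : MemLp H 2 := by
      refine MemLp.of_le_mul (c := (ρ ^ M)⁻¹) hh ?_ (Filter.Eventually.of_forall hHb)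
      refine hh.1.mul (Measurable.aestronglyMeasurable ?_)
      fun_prop
    have h1 := bessel_conv (mulX^[M] χ) ((hφ.dS_iter n).mulX_iter M) a ℓ hℓ hd H hHm x
    have h2 : ∀ m, ‖∫ t, H t * modS (mulX^[M] χ) (a m) (ℓ m) (hℓ m) (x - t)‖ =
        (ℓ m) ^ M * ‖cv χ (a m) (ℓ m) (hℓ m) h x‖ := by
      intro m
      have h3 : ∀ t, H t * modS (mulX^[M] χ) (a m) (ℓ m) (hℓ m) (x - t) =
          (ℓ m : ℂ) ^ M * (h t * modS χ (a m) (ℓ m) (hℓ m) (x - t)) := by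
        intro t
        rw [modS_apply, modS_apply, mulX_iter_apply]
        rcases lt_or_ge |x - t| ρ with h1 | h1
        · simp [hH, hsupp t h1]
        · have : ((x - t : ℝ) : ℂ) ≠ 0 := by
            rw [Ne, Complex.ofReal_eq_zero]
            intro h0; rw [h0] at h1; simp at h1; linarith
          simp only [hH]
          rw [Complex.ofReal_mul, mul_pow]
          field_simp
      simp_rw [h3]
      rw [integral_const_mul, norm_mul, norm_pow, Complex.norm_real, Real.norm_of_nonneg (hℓ m).le]
      rfl
    simp_rw [h2] at h1
    refine h1.trans ?_
    gcongr
    rw [hJ, ← integral_const_mul]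
    refine integral_mono_of_nonneg (Filter.Eventually.of_forall fun t => by positivity)
      ((hh.integrable_norm_pow (by norm_num)).const_mul _) (Filter.Eventually.of_forall fun t => ?_)
    calc ‖H t‖ ^ 2 ≤ ((ρ ^ M)⁻¹ * ‖h t‖) ^ 2 := by gcongr; exact hHb t
      _ = _ := by rw [mul_pow, inv_pow, ← pow_mul, mul_comm M 2]
  have k1 := key n
  have k2 := key (n + 1)
  rw [EuclideanSpace.norm_sq_eq]
  have h4 : ∀ m, ‖Vop φ a ℓ hℓ h n x m‖ ^ 2 ≤
      ρ * (ℓ m * ((ℓ m) ^ (n + 1) * ‖cv χ (a m) (ℓ m) (hℓ m) h x‖) ^ 2) +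
      ρ⁻¹ * (ℓ m * ((ℓ m) ^ n * ‖cv χ (a m) (ℓ m) (hℓ m) h x‖) ^ 2) := by
    intro m
    rw [Vop_coord, norm_mul, norm_e2pi, one_mul, norm_mul, norm_pow, Complex.norm_real,
      Real.norm_of_nonneg (hℓ m).le]
    have hl := hℓ m
    set w := ‖cv χ (a m) (ℓ m) (hℓ m) h x‖
    have h5 : 1 ≤ ρ * ℓ m + ρ⁻¹ * (ℓ m)⁻¹ := by
      rw [← mul_inv]
      set q := ρ * ℓ m
      have hq : 0 < q := by positivity
      rcases le_total 1 q with h | h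
      · have : 0 < q⁻¹ := by positivity
        linarith
      · have := (one_le_inv₀ hq).2 h
        linarith
    calc (ℓ m ^ (n + 1) * w) ^ 2 = (ℓ m ^ (n + 1) * w) ^ 2 * 1 := by ring
      _ ≤ (ℓ m ^ (n + 1) * w) ^ 2 * (ρ * ℓ m + ρ⁻¹ * (ℓ m)⁻¹) := by gcongr
      _ = _ := by field_simp; ring
  calc _ ≤ ∑ m, (ρ * (ℓ m * ((ℓ m) ^ (n + 1) * ‖cv χ (a m) (ℓ m) (hℓ m) h x‖) ^ 2) +
      ρ⁻¹ * (ℓ m * ((ℓ m) ^ n * ‖cv χ (a m) (ℓ m) (hℓ m) h x‖) ^ 2)) :=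
        Finset.sum_le_sum fun m _ => h4 m
    _ ≤ ρ * (C2 * ((ρ ^ (2 * (n + 1)))⁻¹ * J)) + ρ⁻¹ * (C1 * ((ρ ^ (2 * n))⁻¹ * J)) := by
        rw [Finset.sum_add_distrib, ← Finset.mul_sum, ← Finset.mul_sum]
        gcongr
    _ = (C1 + C2) * (ρ ^ (2 * n + 1))⁻¹ * J := by
        field_simp
        ring
    _ ≤ (C1 + C2 + 1) * (ρ ^ (2 * n + 1))⁻¹ * J := by
        have : C1 + C2 ≤ C1 + C2 + 1 := by linarith
        exact mul_le_mul_of_nonneg_right (mul_le_mul_of_nonneg_right this (by positivity)) hJ0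

theorem memLp_two_of_lintegral {h : ℝ → ℂ} (hm : Measurable h) (hf : ∫⁻ t, ‖h t‖ₑ ^ 2 < ∞) :
    MemLp h 2 := by
  refine ⟨hm.aestronglyMeasurable, ?_⟩
  rw [eLpNorm_lt_top_iff_lintegral_rpow_enorm_lt_top (by norm_num) (by norm_num)]
  simpa using hf

theorem integral_sq_le_of_lintegral {h : ℝ → ℂ} (hm : Measurable h) {B : ℝ} (hB : 0 ≤ B)
    (hf : ∫⁻ t, ‖h t‖ₑ ^ 2 ≤ ENNReal.ofReal B) : ∫ t, ‖h t‖ ^ 2 ≤ B := by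
  rw [integral_eq_lintegral_of_nonneg_ae (Filter.Eventually.of_forall fun t => by positivity)
    (hm.norm.pow_const 2).aestronglyMeasurable]
  have : ∀ t, ENNReal.ofReal (‖h t‖ ^ 2) = ‖h t‖ₑ ^ 2 := by
    intro t; rw [ENNReal.ofReal_pow (norm_nonneg _), ofReal_norm]
  simp_rw [this]
  exact ENNReal.toReal_le_of_le_ofReal hB hf

theorem far_lemma (φ : 𝓢(ℝ, ℂ)) (hφ : GoodS φ) (i : ℕ) (hi : 1 ≤ i) : ∃ C : ℝ, 0 < C ∧
    ∀ (N : ℕ) (a ℓ : Fin N → ℝ) (hℓ : ∀ m, 0 < ℓ m)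
    (_ : ∀ m n, m ≠ n → Disjoint (Icc (a m) (a m + ℓ m)) (Icc (a n) (a n + ℓ n)))
    (h : ℝ → ℂ) (_ : Tame h) (c r : ℝ) (_ : 0 < r) (A : ℕ → ℝ) (_ : ∀ k, 0 ≤ A k) (S : ℝ)
    (_ : ∀ t ∈ Metric.closedBall c (2 * r), h t = 0)
    (_ : ∀ k : ℕ, ∫⁻ t in Metric.closedBall c (2 ^ (k + 1) * r), ‖h t‖ₑ ^ 2 ≤
      ENNReal.ofReal (2 ^ k * r * A k ^ 2))
    (_ : ∀ K : ℕ, ∑ k ∈ Finset.range K, (2 ^ (k * i))⁻¹ * A k ≤ S),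
    ∃ P : Fin N → Polynomial ℂ, (∀ m, (P m).degree < (i : WithBot ℕ)) ∧
      ∀ x ∈ Metric.closedBall c r,
        ‖Vop φ a ℓ hℓ h 0 x - WithLp.toLp 2 (fun m => (P m).eval (x : ℂ))‖ ≤ C * S := by
  obtain ⟨C0, hC0, hann⟩ := annulus φ hφ i
  refine ⟨√(C0 * 2 ^ (2 * i + 1)) * 2 ^ i, by positivity, ?_⟩
  intro N a ℓ hℓ hd h hh c r hr A hA0 S h0 hA hS
  have hstep : ∀ (k : ℕ) (y : ℝ), y ∈ Metric.closedBall c r →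
      ‖Vop φ a ℓ hℓ ((Metric.closedBall c (2 ^ (k + 1) * r)).indicator h) i y‖ ≤
      ∑ j ∈ Finset.range (k + 1), √(C0 * 2 ^ (2 * i + 1)) * (r ^ i)⁻¹ * ((2 ^ (j * i))⁻¹ * A j) := by
    intro k y hy
    induction k with
    | zero =>
      have : (Metric.closedBall c (2 ^ (0 + 1) * r)).indicator h = 0 := by
        ext t
        by_cases ht : t ∈ Metric.closedBall c (2 ^ (0 + 1) * r)
        · rw [indicator_of_mem ht]; exact h0 t (by simpa using ht)
        · rw [indicator_of_notMem ht]; rfl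
      rw [this]
      have h2 : Vop φ a ℓ hℓ 0 i y = 0 := by ext m; simp [Vop]
      rw [h2, norm_zero]
      exact Finset.sum_nonneg fun j _ => by have := hA0 j; positivity
    | succ k ih =>
      set s1 := Metric.closedBall c (2 ^ (k + 1) * r) with hs1
      set s2 := Metric.closedBall c (2 ^ (k + 1 + 1) * r) with hs2
      have hsub : s1 ⊆ s2 := by
        apply Metric.closedBall_subset_closedBall
        have : (2:ℝ) ^ (k + 1) ≤ 2 ^ (k + 1 + 1) := pow_le_pow_right₀ (by norm_num) (by omega)
        gcongr
        all_goals norm_num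
      have hm1 : MeasurableSet s1 := Metric.isClosed_closedBall.measurableSet
      have hm2 : MeasurableSet s2 := Metric.isClosed_closedBall.measurableSet
      have hdec : s2.indicator h = fun t => s1.indicator h t + (s2 \ s1).indicator h t := by
        ext t
        by_cases h1 : t ∈ s1
        · simp [h1, hsub h1]
        · by_cases h2 : t ∈ s2 <;> simp [h1, h2]
      rw [hdec, Vop_add φ a ℓ hℓ (hh.indicator hm1) (hh.indicator (hm2.diff hm1)), Finset.sum_range_succ]
      refine (norm_add_le _ _).trans (add_le_add ih ?_)
      set g := (s2 \ s1).indicator h with hg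
      have hgm : Measurable g := hh.1.indicator (hm2.diff hm1)
      have hgI : ∫⁻ t, ‖g t‖ₑ ^ 2 ≤ ENNReal.ofReal (2 ^ (k + 1) * r * A (k + 1) ^ 2) := by
        refine le_trans ?_ (hA (k + 1))
        rw [← lintegral_indicator hm2]
        refine lintegral_mono fun t => ?_
        by_cases h2 : t ∈ s2
        · by_cases h1 : t ∈ s1 <;> simp [hg, h1, h2]
        · simp [hg, h2]
      have hB0 : 0 ≤ 2 ^ (k + 1) * r * A (k + 1) ^ 2 := by positivity
      have hgr := integral_sq_le_of_lintegral hgm hB0 hgI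
      have hgM := memLp_two_of_lintegral hgm (hgI.trans_lt ENNReal.ofReal_lt_top)
      have hρ : 0 < 2 ^ k * r := by positivity
      have h3 := hann N a ℓ hℓ hd g hgM y (2 ^ k * r) hρ (by
        intro t ht
        apply indicator_of_notMem
        rintro ⟨_, h4⟩
        apply h4
        rw [hs1, Metric.mem_closedBall, Real.dist_eq]
        rw [Metric.mem_closedBall, Real.dist_eq] at hy
        have : |t - c| ≤ |y - t| + |y - c| := by
          rw [show t - c = -(y - t) + (y - c) by ring]
          exact (abs_add_le _ _).trans (by rw [abs_neg])
        have h5 : (1:ℝ) ≤ 2 ^ k := one_le_pow₀ (by norm_num)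
        rw [pow_succ]
        nlinarith)
      have hA1 := hA0 (k + 1)
      refine abs_le_of_sq_le_sq' ?_ (by positivity) |>.2
      refine h3.trans ?_
      calc _ ≤ C0 * ((2 ^ k * r) ^ (2 * i + 1))⁻¹ * (2 ^ (k + 1) * r * A (k + 1) ^ 2) := by gcongr
        _ = _ := by
          simp only [mul_pow]
          rw [Real.sq_sqrt (by positivity)]
          field_simp
          ring
  have hVi : ∀ y ∈ Icc (c - r) (c + r), ‖Vop φ a ℓ hℓ h i y‖ ≤ √(C0 * 2 ^ (2 * i + 1)) * (r ^ i)⁻¹ * S := by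
    intro y hy
    have hy' : y ∈ Metric.closedBall c r := by rwa [Real.closedBall_eq_Icc]
    have hlim : Filter.Tendsto (fun k : ℕ => Vop φ a ℓ hℓ ((Metric.closedBall c (2 ^ (k + 1) * r)).indicator h) i y)
        Filter.atTop (nhds (Vop φ a ℓ hℓ h i y)) := by
      have : Filter.Tendsto (fun k : ℕ => fun m => ∫ t, ((Metric.closedBall c (2 ^ (k + 1) * r)).indicator h t
            * e2pi (-(a m * t))) * kerS φ (ℓ m) (hℓ m) i (y - t)) Filter.atTop
          (nhds (fun m => ∫ t, (h t * e2pi (-(a m * t))) * kerS φ (ℓ m) (hℓ m) i (y - t))) := by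
        rw [tendsto_pi_nhds]
        intro m
        refine tendsto_integral_of_dominated_convergence
          (fun t => ‖(h t * e2pi (-(a m * t))) * kerS φ (ℓ m) (hℓ m) i (y - t)‖) ?_
          ((hh.mul_e (a m)).integrable _ y).norm ?_ ?_
        · intro k
          exact (((hh.indicator Metric.isClosed_closedBall.measurableSet).mul_e (a m)).integrable _ y).1
        · intro k
          refine Filter.Eventually.of_forall fun t => ?_
          rw [norm_mul, norm_mul, norm_mul, norm_mul]
          gcongr
          exact norm_indicator_le_norm_self _ _
        · refine Filter.Eventually.of_forall fun t => ?_
          refine tendsto_const_nhds.congr' ?_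
          have h1 : Filter.Tendsto (fun k : ℕ => (2:ℝ) ^ (k + 1) * r) Filter.atTop Filter.atTop :=
            ((tendsto_pow_atTop_atTop_of_one_lt (by norm_num : (1:ℝ) < 2)).comp
              (Filter.tendsto_add_atTop_nat 1)).atTop_mul_const hr
          filter_upwards [h1.eventually_ge_atTop (dist t c)] with k hk
          rw [indicator_of_mem (Metric.mem_closedBall.2 hk)]
      exact ((PiLp.continuousLinearEquiv 2 ℝ (fun _ : Fin N => ℂ)).symm.continuous.tendsto _).comp this
    refine le_of_tendsto hlim.norm (Filter.Eventually.of_forall fun k => ?_)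
    refine (hstep k y hy').trans ?_
    rw [← Finset.mul_sum]
    gcongr
    exact hS _
  obtain ⟨P, hP, hPb⟩ := taylor_poly (fun n => Vop φ a ℓ hℓ h n) (Vop_hasDerivAt φ a ℓ hℓ hh) i hi
    (c - r) (c + r) _ (by linarith) hVi
  refine ⟨P, hP, fun x hx => ?_⟩
  rw [Real.closedBall_eq_Icc] at hx
  refine (hPb x hx).trans (le_of_eq ?_)
  rw [show c + r - (c - r) = 2 * r by ring, mul_pow]
  field_simp

/-- superlevel set of a maximal function -/
def MS (g : ℝ → ℝ≥0∞) (t : ℝ) : Set ℝ :=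
  {x | ∃ r > 0, ENNReal.ofReal (t * r) < ∫⁻ y in Metric.closedBall x r, g y}

theorem MS_cover (g : ℝ → ℝ≥0∞) (hg : ∫⁻ y, g y < ∞) {t : ℝ} (ht : 0 < t) (S : Set ℝ) (ρ : ℝ → ℝ)
    (hρ : ∀ x ∈ S, 0 < ρ x) (hρ2 : ∀ x ∈ S, ENNReal.ofReal (t * ρ x) < ∫⁻ y in Metric.closedBall x (ρ x), g y) :
    ∃ u ⊆ S, u.Countable ∧ (u.PairwiseDisjoint fun x => Metric.closedBall x (ρ x)) ∧
      ∀ x ∈ S, ∃ y ∈ u, Metric.closedBall x (ρ x) ⊆ Metric.closedBall y (5 * ρ y) := by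
  obtain ⟨u, hu, hd, hc⟩ := Vitali.exists_disjoint_subfamily_covering_enlargement_closedBall S
    (fun x : ℝ => x) ρ ((∫⁻ y, g y).toReal / t) (by
      intro x hx
      rw [le_div_iff₀ ht, mul_comm]
      have h1 := (hρ2 x hx).le.trans (setLIntegral_le_lintegral _ _)
      exact (ENNReal.ofReal_le_iff_le_toReal hg.ne).1 h1) 5 (by norm_num)
  refine ⟨u, hu, ?_, hd, hc⟩
  refine hd.countable_of_nonempty_interior fun x hx => ?_
  exact ⟨x, Metric.ball_subset_interior_closedBall (Metric.mem_ball_self (hρ x (hu hx)))⟩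

theorem MS_weak (g : ℝ → ℝ≥0∞) {t : ℝ} (ht : 0 < t) :
    volume (MS g t) ≤ ENNReal.ofReal (10 / t) * ∫⁻ y, g y := by
  rcases eq_or_ne (∫⁻ y, g y) ∞ with h | h
  · rw [h, ENNReal.mul_top]
    · exact le_top
    · simp only [ne_eq, ENNReal.ofReal_eq_zero, not_le]; positivity
  have hex : ∀ x, ∃ r, x ∈ MS g t → 0 < r ∧ ENNReal.ofReal (t * r) < ∫⁻ y in Metric.closedBall x r, g y := by
    intro x
    by_cases hx : x ∈ MS g t
    · obtain ⟨r, hr, h2⟩ := hx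
      exact ⟨r, fun _ => ⟨hr, h2⟩⟩
    · exact ⟨0, fun h => absurd h hx⟩
  choose ρ hρ using hex
  obtain ⟨u, hu, hcount, hd, hc⟩ := MS_cover g (lt_top_iff_ne_top.2 h) ht (MS g t) ρ
    (fun x hx => (hρ x hx).1) (fun x hx => (hρ x hx).2)
  have hcov : MS g t ⊆ ⋃ y ∈ u, Metric.closedBall y (5 * ρ y) := by
    intro x hx
    obtain ⟨y, hy, hs⟩ := hc x hx
    exact mem_biUnion hy (hs (Metric.mem_closedBall_self (hρ x hx).1.le))
  calc volume (MS g t) ≤ ∑' y : u, volume (Metric.closedBall (y:ℝ) (5 * ρ y)) :=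
        (measure_mono hcov).trans (measure_biUnion_le volume hcount _)
    _ ≤ ∑' y : u, ENNReal.ofReal (10 / t) * ∫⁻ x in Metric.closedBall (y:ℝ) (ρ y), g x := by
        refine ENNReal.tsum_le_tsum fun y => ?_
        have hy := hρ y (hu y.2)
        rw [Real.volume_closedBall]
        calc ENNReal.ofReal (2 * (5 * ρ y)) = ENNReal.ofReal (10 / t) * ENNReal.ofReal (t * ρ y) := by
              rw [← ENNReal.ofReal_mul (by positivity)]; congr 1; field_simp; ring
          _ ≤ _ := by gcongr; exact hy.2.le
    _ = ENNReal.ofReal (10 / t) * ∫⁻ x in ⋃ y ∈ u, Metric.closedBall y (ρ y), g x := by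
        rw [ENNReal.tsum_mul_left, lintegral_biUnion hcount
          (fun _ _ => Metric.isClosed_closedBall.measurableSet) hd]
    _ ≤ _ := by gcongr; exact Measure.restrict_le_self

theorem MS_anti (g : ℝ → ℝ≥0∞) : Antitone fun t => volume (MS g t) := by
  intro s t hst
  refine measure_mono ?_
  rintro x ⟨r, hr, h⟩
  exact ⟨r, hr, lt_of_le_of_lt (ENNReal.ofReal_le_ofReal (by gcongr)) h⟩

/-- choice of a nearly maximal radius -/
theorem MS_radius (g : ℝ → ℝ≥0∞) (hg : ∫⁻ y, g y < ∞) {t : ℝ} (ht : 0 < t) {x : ℝ} (hx : x ∈ MS g t) :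
    ∃ r > 0, ENNReal.ofReal (t * r) < ∫⁻ y in Metric.closedBall x r, g y ∧
      ∀ r', 2 * r ≤ r' → ∫⁻ y in Metric.closedBall x r', g y ≤ ENNReal.ofReal (t * r') := by
  set A := {r : ℝ | 0 < r ∧ ENNReal.ofReal (t * r) < ∫⁻ y in Metric.closedBall x r, g y} with hA
  have hne : A.Nonempty := by obtain ⟨r, hr, h⟩ := hx; exact ⟨r, hr, h⟩
  have hbd : BddAbove A := by
    refine ⟨(∫⁻ y, g y).toReal / t, ?_⟩
    rintro r ⟨_, hr⟩
    rw [le_div_iff₀ ht, mul_comm]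
    have h1 := hr.le.trans (setLIntegral_le_lintegral _ _)
    exact (ENNReal.ofReal_le_iff_le_toReal hg.ne).1 h1
  have hpos : 0 < sSup A := by
    obtain ⟨r, hr⟩ := hne
    exact hr.1.trans_le (le_csSup hbd hr)
  obtain ⟨r, hr, hlt⟩ := exists_lt_of_lt_csSup hne (show sSup A / 2 < sSup A by linarith)
  refine ⟨r, hr.1, hr.2, fun r' hr' => ?_⟩
  by_contra hcon
  push Not at hcon
  have : r' ∈ A := ⟨by linarith [hr.1], hcon⟩
  have := le_csSup hbd this
  linarith

theorem enorm_sq_add_le {E : Type*} [NormedAddCommGroup E] (x e : E) :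
    ‖x‖ₑ ^ 2 ≤ 2 * ‖x - e‖ₑ ^ 2 + 2 * ‖e‖ₑ ^ 2 := by
  have h1 : ‖x‖ ^ 2 ≤ 2 * ‖x - e‖ ^ 2 + 2 * ‖e‖ ^ 2 := by
    have : ‖x‖ ≤ ‖x - e‖ + ‖e‖ := by simpa using norm_add_le (x - e) e
    nlinarith [norm_nonneg x, sq_nonneg (‖x - e‖ - ‖e‖), norm_nonneg (x - e), norm_nonneg e]
  have h2 := ENNReal.ofReal_le_ofReal h1
  rw [ENNReal.ofReal_add (by positivity) (by positivity), ENNReal.ofReal_mul (by norm_num),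
    ENNReal.ofReal_mul (by norm_num), ENNReal.ofReal_pow (norm_nonneg _), ENNReal.ofReal_pow (norm_nonneg _),
    ENNReal.ofReal_pow (norm_nonneg _), ofReal_norm, ofReal_norm, ofReal_norm] at h2
  simpa using h2

theorem good_lambda {E : Type*} [NormedAddCommGroup E] (F : ℝ → E) (hF : Continuous F)
    (hFI : ∫⁻ x, ‖F x‖ₑ ^ 2 < ∞) (f : ℝ → ℂ) {Co : ℝ} (hCo : 0 < Co)
    (hosc : ∀ c r D : ℝ, 0 < r → 0 ≤ D →
      (∀ k : ℕ, ∫⁻ x in Metric.closedBall c (2 ^ k * r), ‖f x‖ₑ ^ 2 ≤ ENNReal.ofReal (D * (2 ^ k * r))) →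
      ∃ e : E, ∫⁻ x in Metric.closedBall c r, ‖F x - e‖ₑ ^ 2 ≤ ENNReal.ofReal (Co * D * r))
    {γ : ℝ} (hγ : 0 < γ) (hγ2 : 4 * Co * γ ≤ 1) {t : ℝ} (ht : 0 < t) :
    volume (MS (fun x => ‖F x‖ₑ ^ 2) (16 * t)) ≤
      ENNReal.ofReal (15 * Co * γ) * volume (MS (fun x => ‖F x‖ₑ ^ 2) (t / 2)) +
        volume (MS (fun x => ‖f x‖ₑ ^ 2) (γ * t)) := by
  set G : ℝ → ℝ≥0∞ := fun x => ‖F x‖ₑ ^ 2 with hG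
  set w : ℝ → ℝ≥0∞ := fun x => ‖f x‖ₑ ^ 2 with hw
  have hex : ∀ x, ∃ r, x ∈ MS G t → 0 < r ∧ ENNReal.ofReal (t * r) < ∫⁻ y in Metric.closedBall x r, G y ∧
      ∀ r', 2 * r ≤ r' → ∫⁻ y in Metric.closedBall x r', G y ≤ ENNReal.ofReal (t * r') := by
    intro x
    by_cases hx : x ∈ MS G t
    · obtain ⟨r, hr, h2⟩ := MS_radius G hFI ht hx
      exact ⟨r, fun _ => ⟨hr, h2⟩⟩
    · exact ⟨0, fun h => absurd h hx⟩
  choose ρ hρ using hex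
  have hFe : ∀ e, Measurable (fun x => ‖F x - e‖ₑ ^ 2) := fun e =>
    ((hF.sub continuous_const).enorm.measurable).pow_const 2
  have hGm : Measurable G := (hF.enorm.measurable).pow_const 2
  obtain ⟨u, hu, hcount, hd, hc⟩ := MS_cover G hFI ht (MS G t) ρ
    (fun x hx => (hρ x hx).1) (fun x hx => (hρ x hx).2.1)
  have hsmall : (∑' y : u, ENNReal.ofReal (2 * ρ y)) ≤ volume (MS G (t / 2)) := by
    have h1 : ⋃ y ∈ u, Metric.closedBall y (ρ y) ⊆ MS G (t / 2) := by
      intro z hz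
      simp only [mem_iUnion, exists_prop] at hz
      obtain ⟨y, hy, hz⟩ := hz
      obtain ⟨h2, h3, h4⟩ := hρ y (hu hy)
      refine ⟨2 * ρ y, by positivity, ?_⟩
      rw [show t / 2 * (2 * ρ y) = t * ρ y by ring]
      refine h3.trans_le (lintegral_mono_set ?_)
      apply Metric.closedBall_subset_closedBall'
      rw [dist_comm]
      rw [Metric.mem_closedBall] at hz
      linarith
    refine le_trans (le_of_eq ?_) (measure_mono h1)
    rw [measure_biUnion hcount hd (fun _ _ => Metric.isClosed_closedBall.measurableSet)]
    simp_rw [Real.volume_closedBall]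
  have hlocal : ∀ y ∈ u, volume ((MS G (16 * t) \ MS w (γ * t)) ∩ Metric.closedBall y (5 * ρ y)) ≤
      ENNReal.ofReal (15 * Co * γ) * ENNReal.ofReal (2 * ρ y) := by
    intro y hy
    obtain ⟨hr0, hr1, hr2⟩ := hρ y (hu hy)
    set r := ρ y with hr
    rcases eq_empty_or_nonempty ((MS G (16 * t) \ MS w (γ * t)) ∩ Metric.closedBall y (5 * r)) with h | ⟨z, ⟨hz1, hz2⟩, hz3⟩
    · rw [h]; simp
    have hzw : ∀ r' > 0, ∫⁻ x in Metric.closedBall z r', w x ≤ ENNReal.ofReal (γ * t * r') := by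
      intro r' hr'
      by_contra hcon
      push Not at hcon
      exact hz2 ⟨r', hr', hcon⟩
    rw [Metric.mem_closedBall] at hz3
    obtain ⟨e, he⟩ := hosc y (6 * r) (2 * γ * t) (by positivity) (by positivity) (by
      intro k
      have h1 : (1:ℝ) ≤ 2 ^ k := one_le_pow₀ (by norm_num)
      calc ∫⁻ x in Metric.closedBall y (2 ^ k * (6 * r)), w x
          ≤ ∫⁻ x in Metric.closedBall z (2 ^ k * (12 * r)), w x := by
            refine lintegral_mono_set (Metric.closedBall_subset_closedBall' ?_)
            rw [dist_comm]
            nlinarith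
        _ ≤ _ := hzw _ (by positivity)
        _ = _ := by congr 1; ring)
    set Q := Metric.closedBall y (6 * r) with hQ
    have hQm : MeasurableSet Q := Metric.isClosed_closedBall.measurableSet
    have hQv : volume Q = ENNReal.ofReal (12 * r) := by
      rw [hQ, Real.volume_closedBall]; congr 1; ring
    have hGQ : ∫⁻ x in Q, G x ≤ ENNReal.ofReal (t * (6 * r)) := hr2 _ (by linarith)
    -- size of e
    have he2 : ‖e‖ₑ ^ 2 ≤ ENNReal.ofReal (2 * t) := by
      have h1 : ∫⁻ x in Q, ‖e‖ₑ ^ 2 ≤ ∫⁻ x in Q, (2 * ‖F x - e‖ₑ ^ 2 + 2 * G x) := by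
        refine lintegral_mono fun x => ?_
        have := enorm_sq_add_le e (F x)
        rwa [← neg_sub, enorm_neg] at this
      rw [lintegral_const, Measure.restrict_apply_univ, hQv, lintegral_add_left ((hFe e).const_mul 2),
        lintegral_const_mul _ (hFe e), lintegral_const_mul _ hGm] at h1
      have h2 : ‖e‖ₑ ^ 2 * ENNReal.ofReal (12 * r) ≤ ENNReal.ofReal (2 * t) * ENNReal.ofReal (12 * r) := by
        refine h1.trans ?_
        calc _ ≤ ENNReal.ofReal 2 * ENNReal.ofReal (Co * (2 * γ * t) * (6 * r)) +
              ENNReal.ofReal 2 * ENNReal.ofReal (t * (6 * r)) := by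
              rw [ENNReal.ofReal_ofNat]; gcongr
          _ = ENNReal.ofReal (2 * (Co * (2 * γ * t) * (6 * r)) + 2 * (t * (6 * r))) := by
              rw [← ENNReal.ofReal_mul (by norm_num), ← ENNReal.ofReal_mul (by norm_num),
                ENNReal.ofReal_add (by positivity) (by positivity)]
          _ ≤ ENNReal.ofReal (2 * t * (12 * r)) := by
              apply ENNReal.ofReal_le_ofReal
              have : 4 * Co * γ * (t * r) ≤ 1 * (t * r) := by gcongr
              nlinarith [mul_pos ht hr0]
          _ = _ := by rw [ENNReal.ofReal_mul (by positivity)]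
      exact (ENNReal.mul_le_mul_iff_left (by simpa using hr0) ENNReal.ofReal_ne_top).1 h2
    have hsub : (MS G (16 * t) \ MS w (γ * t)) ∩ Metric.closedBall y (5 * r) ⊆
        MS (Q.indicator fun x => ‖F x - e‖ₑ ^ 2) (4 * t) := by
      rintro x ⟨⟨⟨q, hq0, hq⟩, _⟩, hx⟩
      rw [Metric.mem_closedBall] at hx
      have hqr : q < r := by
        by_contra hcon
        push Not at hcon
        have h1 : ∫⁻ y in Metric.closedBall x q, G y ≤ ENNReal.ofReal (t * (q + 5 * r)) := by
          refine le_trans (lintegral_mono_set (Metric.closedBall_subset_closedBall' ?_))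
            (hr2 (q + 5 * r) (by linarith))
          linarith
        have h2 := hq.trans_le h1
        rw [ENNReal.ofReal_lt_ofReal_iff_of_nonneg (by positivity)] at h2
        nlinarith [mul_le_mul_of_nonneg_left hcon ht.le, mul_pos ht hr0]
      refine ⟨q, hq0, ?_⟩
      have hsQ : Metric.closedBall x q ⊆ Q := Metric.closedBall_subset_closedBall' (by linarith)
      have h3 : ∫⁻ y in Metric.closedBall x q, Q.indicator (fun x => ‖F x - e‖ₑ ^ 2) y =
          ∫⁻ y in Metric.closedBall x q, ‖F y - e‖ₑ ^ 2 := by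
        refine setLIntegral_congr_fun Metric.isClosed_closedBall.measurableSet fun y hy => ?_
        exact indicator_of_mem (hsQ hy) _
      rw [h3]
      have h4 : ∫⁻ y in Metric.closedBall x q, G y ≤
          (2 * ∫⁻ y in Metric.closedBall x q, ‖F y - e‖ₑ ^ 2) + ENNReal.ofReal (8 * t * q) := by
        calc _ ≤ ∫⁻ y in Metric.closedBall x q, (2 * ‖F y - e‖ₑ ^ 2 + 2 * ‖e‖ₑ ^ 2) :=
              lintegral_mono fun y => enorm_sq_add_le _ _
          _ = (2 * ∫⁻ y in Metric.closedBall x q, ‖F y - e‖ₑ ^ 2) + 2 * ‖e‖ₑ ^ 2 * ENNReal.ofReal (2 * q) := by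
              rw [lintegral_add_left ((hFe e).const_mul 2), lintegral_const_mul _ (hFe e), lintegral_const,
                Measure.restrict_apply_univ, Real.volume_closedBall]
          _ ≤ (2 * ∫⁻ y in Metric.closedBall x q, ‖F y - e‖ₑ ^ 2) +
              ENNReal.ofReal 2 * ENNReal.ofReal (2 * t) * ENNReal.ofReal (2 * q) := by
              rw [ENNReal.ofReal_ofNat]; gcongr
          _ = _ := by
              rw [← ENNReal.ofReal_mul (by norm_num), ← ENNReal.ofReal_mul (by positivity)]
              congr 2; ring
      by_contra hcon
      push Not at hcon
      have h5 := hq.trans_le (h4.trans (add_le_add_left (mul_le_mul_right hcon 2) _))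
      rw [← ENNReal.ofReal_ofNat 2, ← ENNReal.ofReal_mul (by norm_num), ← ENNReal.ofReal_add (by positivity) (by positivity),
        ENNReal.ofReal_lt_ofReal_iff_of_nonneg (by positivity)] at h5
      nlinarith
    calc _ ≤ _ := measure_mono hsub
      _ ≤ _ := MS_weak _ (by positivity)
      _ ≤ ENNReal.ofReal (10 / (4 * t)) * ENNReal.ofReal (Co * (2 * γ * t) * (6 * r)) := by
          rw [lintegral_indicator hQm]
          gcongr
      _ = _ := by
          rw [← ENNReal.ofReal_mul (by positivity), ← ENNReal.ofReal_mul (by positivity)]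
          congr 1; field_simp; ring
  have hcov : MS G (16 * t) ⊆ (⋃ y ∈ u, ((MS G (16 * t) \ MS w (γ * t)) ∩ Metric.closedBall y (5 * ρ y))) ∪
      MS w (γ * t) := by
    intro x hx
    by_cases hxw : x ∈ MS w (γ * t)
    · exact Or.inr hxw
    left
    have hxt : x ∈ MS G t := by
      obtain ⟨q, hq, h⟩ := hx
      refine ⟨q, hq, lt_of_le_of_lt (ENNReal.ofReal_le_ofReal ?_) h⟩
      nlinarith [mul_pos ht hq]
    obtain ⟨y, hy, hs⟩ := hc x hxt
    exact mem_biUnion hy ⟨⟨hx, hxw⟩, hs (Metric.mem_closedBall_self (hρ x hxt).1.le)⟩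
  calc _ ≤ _ := measure_mono hcov
    _ ≤ _ := measure_union_le _ _
    _ ≤ _ := by
      gcongr
      calc _ ≤ _ := measure_biUnion_le volume hcount _
        _ ≤ ∑' y : u, ENNReal.ofReal (15 * Co * γ) * ENNReal.ofReal (2 * ρ y) :=
            ENNReal.tsum_le_tsum fun y => hlocal y y.2
        _ ≤ _ := by rw [ENNReal.tsum_mul_left]; gcongr

theorem lintegral_scale (g : ℝ → ℝ≥0∞) (hg : Measurable g) {c : ℝ} (hc : 0 < c) :
    ∫⁻ t, g t = ENNReal.ofReal c * ∫⁻ t, g (c * t) := by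
  have h := Real.smul_map_volume_mul_left hc.ne'
  conv_lhs => rw [← h]
  rw [lintegral_smul_measure, lintegral_map hg (by fun_prop), abs_of_pos hc, smul_eq_mul]

theorem setLIntegral_scale (g : ℝ → ℝ≥0∞) (hg : Measurable g) {c L : ℝ} (hc : 0 < c) :
    ∫⁻ t in Ioc 0 (c * L), g t = ENNReal.ofReal c * ∫⁻ t in Ioc 0 L, g (c * t) := by
  rw [← lintegral_indicator measurableSet_Ioc, ← lintegral_indicator measurableSet_Ioc,
    lintegral_scale _ (hg.indicator measurableSet_Ioc) hc]
  congr 1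
  refine lintegral_congr fun t => ?_
  by_cases ht : t ∈ Ioc 0 L
  · rw [indicator_of_mem ht, indicator_of_mem]
    exact ⟨mul_pos hc ht.1, mul_le_mul_of_nonneg_left ht.2 hc.le⟩
  · rw [indicator_of_notMem ht, indicator_of_notMem]
    rintro ⟨h1, h2⟩
    exact ht ⟨(mul_pos_iff_of_pos_left hc).1 h1, (mul_le_mul_iff_of_pos_left hc).1 h2⟩

theorem MS_tail (f : ℝ → ℂ) (hf : Measurable f) {t : ℝ} (ht : 0 < t) :
    volume (MS (fun x => ‖f x‖ₑ ^ 2) t) ≤ ENNReal.ofReal (20 / t) *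
      (volume.withDensity fun x => ‖f x‖ₑ ^ 2) {x | t / 4 < ‖f x‖ ^ 2} := by
  have hm : MeasurableSet {x | t / 4 < ‖f x‖ ^ 2} := measurableSet_lt measurable_const (hf.norm.pow_const 2)
  set s := {x | t / 4 < ‖f x‖ ^ 2} with hs
  have hsub : MS (fun x => ‖f x‖ₑ ^ 2) t ⊆ MS (s.indicator fun x => ‖f x‖ₑ ^ 2) (t / 2) := by
    rintro x ⟨r, hr, h⟩
    refine ⟨r, hr, ?_⟩
    have h1 : ∫⁻ y in Metric.closedBall x r, ‖f y‖ₑ ^ 2 ≤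
        (∫⁻ y in Metric.closedBall x r, s.indicator (fun x => ‖f x‖ₑ ^ 2) y) + ENNReal.ofReal (t / 2 * r) := by
      calc _ ≤ ∫⁻ y in Metric.closedBall x r, (s.indicator (fun x => ‖f x‖ₑ ^ 2) y + ENNReal.ofReal (t / 4)) := by
            refine lintegral_mono fun y => ?_
            by_cases hy : y ∈ s
            · rw [indicator_of_mem hy]; exact le_self_add
            · rw [indicator_of_notMem hy, zero_add]
              simp only [hs, mem_ofPred_eq, not_lt] at hy
              rw [← ofReal_norm, ← ENNReal.ofReal_pow (norm_nonneg _)]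
              exact ENNReal.ofReal_le_ofReal hy
        _ = _ := by
            rw [lintegral_add_right _ measurable_const, lintegral_const, Measure.restrict_apply_univ,
              Real.volume_closedBall, ← ENNReal.ofReal_mul (by positivity)]
            congr 2; ring
    by_contra hcon
    push Not at hcon
    have h2 := h.trans_le (h1.trans (add_le_add_left hcon _))
    rw [← ENNReal.ofReal_add (by positivity) (by positivity)] at h2
    apply absurd h2
    rw [show t / 2 * r + t / 2 * r = t * r by ring]
    exact lt_irrefl _
  calc _ ≤ _ := measure_mono hsub
    _ ≤ _ := MS_weak _ (by positivity)
    _ = _ := by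
      rw [withDensity_apply _ hm, lintegral_indicator hm]
      congr 2; field_simp; norm_num

theorem MS_W (f : ℝ → ℂ) (hf : Measurable f) {q γ : ℝ} (hq : 1 < q) (hγ : 0 < γ) :
    ∫⁻ t in Ioi (0:ℝ), volume (MS (fun x => ‖f x‖ₑ ^ 2) (2 * γ * t)) * ENNReal.ofReal (t ^ (q - 1)) ≤
      ENNReal.ofReal (10 / γ * (1 / (q - 1)) * (2 / γ) ^ (q - 1)) * ∫⁻ x, ENNReal.ofReal ((‖f x‖ ^ 2) ^ q) := by
  set m := volume.withDensity fun x => ‖f x‖ₑ ^ 2 with hm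
  have hq1 : 0 < q - 1 := by linarith
  have hfm : Measurable fun x => 2 / γ * ‖f x‖ ^ 2 := (hf.norm.pow_const 2).const_mul _
  have hlc := lintegral_rpow_eq_lintegral_meas_lt_mul m (f := fun x => 2 / γ * ‖f x‖ ^ 2)
    (Filter.Eventually.of_forall fun x => by positivity) hfm.aemeasurable hq1
  have hA : ∫⁻ t in Ioi (0:ℝ), m {x | t < 2 / γ * ‖f x‖ ^ 2} * ENNReal.ofReal (t ^ (q - 1 - 1)) =
      ENNReal.ofReal (1 / (q - 1)) * ∫⁻ x, ENNReal.ofReal ((2 / γ * ‖f x‖ ^ 2) ^ (q - 1)) ∂m := by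
    rw [hlc, ← mul_assoc, ← ENNReal.ofReal_mul (by positivity), one_div, inv_mul_cancel₀ hq1.ne',
      ENNReal.ofReal_one, one_mul]
  have hB : ∫⁻ x, ENNReal.ofReal ((2 / γ * ‖f x‖ ^ 2) ^ (q - 1)) ∂m =
      ENNReal.ofReal ((2 / γ) ^ (q - 1)) * ∫⁻ x, ENNReal.ofReal ((‖f x‖ ^ 2) ^ q) := by
    rw [hm, lintegral_withDensity_eq_lintegral_mul _ ((hf.enorm).pow_const 2)
      (hfm.pow_const _).ennreal_ofReal, ← lintegral_const_mul _ ((hf.norm.pow_const 2).pow_const _).ennreal_ofReal]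
    refine lintegral_congr fun x => ?_
    simp only [Pi.mul_apply]
    rw [← ofReal_norm, ← ENNReal.ofReal_pow (norm_nonneg _), ← ENNReal.ofReal_mul (by positivity),
      ← ENNReal.ofReal_mul (by positivity)]
    congr 1
    rw [Real.mul_rpow (by positivity) (by positivity)]
    have : (‖f x‖ ^ 2) ^ q = ‖f x‖ ^ 2 * (‖f x‖ ^ 2) ^ (q - 1) := by
      rcases eq_or_lt_of_le (show 0 ≤ ‖f x‖ ^ 2 by positivity) with h | h
      · rw [← h, Real.zero_rpow (by linarith), zero_mul]
      · rw [Real.rpow_sub_one h.ne', mul_div_cancel₀ _ h.ne']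
    rw [this]; ring
  calc _ ≤ ∫⁻ t in Ioi (0:ℝ), ENNReal.ofReal (10 / γ) *
        (m {x | t < 2 / γ * ‖f x‖ ^ 2} * ENNReal.ofReal (t ^ (q - 1 - 1))) := by
        refine setLIntegral_mono' measurableSet_Ioi fun t ht => ?_
        have ht : 0 < t := ht
        have h1 := MS_tail f hf (t := 2 * γ * t) (by positivity)
        have h2 : {x | 2 * γ * t / 4 < ‖f x‖ ^ 2} = {x | t < 2 / γ * ‖f x‖ ^ 2} := by
          ext x
          simp only [mem_ofPred_eq]
          rw [div_mul_eq_mul_div, lt_div_iff₀ hγ]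
          constructor <;> intro h <;> linarith
        rw [h2] at h1
        calc _ ≤ ENNReal.ofReal (20 / (2 * γ * t)) * m {x | t < 2 / γ * ‖f x‖ ^ 2} * ENNReal.ofReal (t ^ (q - 1)) := by
              gcongr
          _ = m {x | t < 2 / γ * ‖f x‖ ^ 2} * (ENNReal.ofReal (20 / (2 * γ * t)) * ENNReal.ofReal (t ^ (q - 1))) := by ring
          _ = m {x | t < 2 / γ * ‖f x‖ ^ 2} * (ENNReal.ofReal (10 / γ) * ENNReal.ofReal (t ^ (q - 1 - 1))) := by
              rw [← ENNReal.ofReal_mul (by positivity), ← ENNReal.ofReal_mul (by positivity),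
                Real.rpow_sub_one ht.ne' (q - 1)]
              generalize t ^ (q - 1) = y
              congr 2; field_simp; ring
          _ = _ := by ring
    _ = ENNReal.ofReal (10 / γ) * ∫⁻ t in Ioi (0:ℝ), (m {x | t < 2 / γ * ‖f x‖ ^ 2} * ENNReal.ofReal (t ^ (q - 1 - 1))) := by
        rw [lintegral_const_mul' _ _ ENNReal.ofReal_ne_top]
    _ = _ := by
        rw [hA, hB, ← mul_assoc, ← mul_assoc, ← ENNReal.ofReal_mul (by positivity), ← ENNReal.ofReal_mul (by positivity)]

theorem lp_abs {q Co : ℝ} (hq : 1 < q) (hCo : 0 < Co) : ∃ C : ℝ, 0 < C ∧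
    ∀ (N : ℕ) (F : ℝ → EuclideanSpace ℂ (Fin N)) (_ : Continuous F)
    (_ : ∫⁻ x, ‖F x‖ₑ ^ 2 < ∞) (f : ℝ → ℂ) (_ : Measurable f)
    (_ : ∀ c r D : ℝ, 0 < r → 0 ≤ D →
      (∀ k : ℕ, ∫⁻ x in Metric.closedBall c (2 ^ k * r), ‖f x‖ₑ ^ 2 ≤ ENNReal.ofReal (D * (2 ^ k * r))) →
      ∃ e, ∫⁻ x in Metric.closedBall c r, ‖F x - e‖ₑ ^ 2 ≤ ENNReal.ofReal (Co * D * r)),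
    ∫⁻ x, ENNReal.ofReal ((‖F x‖ ^ 2) ^ q) ≤ ENNReal.ofReal C * ∫⁻ x, ENNReal.ofReal ((‖f x‖ ^ 2) ^ q) := by
  have h32 : (0:ℝ) < 32 ^ q := by positivity
  set γ := 1 / (4 * Co + 30 * Co * 32 ^ q) with hγd
  have hγ : 0 < γ := by positivity
  have hγ2 : 4 * Co * γ ≤ 1 := by
    rw [hγd, mul_one_div, div_le_one (by positivity)]; nlinarith [mul_pos hCo h32]
  have hγ3 : 32 ^ q * (15 * Co * γ) ≤ 1 / 2 := by
    rw [hγd, mul_one_div, mul_div_assoc', div_le_iff₀ (by positivity)]; nlinarith [mul_pos hCo h32]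
  set CW := 10 / γ * (1 / (q - 1)) * (2 / γ) ^ (q - 1) with hCW
  have hq1 : 0 < q - 1 := by linarith
  have hCW0 : 0 < CW := by positivity
  refine ⟨q * (2 * (32 ^ q * CW)), by positivity, ?_⟩
  intro N F hF hFI f hf hosc
  set ν : ℝ → ℝ≥0∞ := fun t => volume (MS (fun x => ‖F x‖ₑ ^ 2) t) with hν
  have hνm : Measurable ν := (MS_anti _).measurable
  set T := ∫⁻ x, ENNReal.ofReal ((‖f x‖ ^ 2) ^ q) with hT
  set W := ∫⁻ t in Ioi (0:ℝ), volume (MS (fun x => ‖f x‖ₑ ^ 2) (2 * γ * t)) * ENNReal.ofReal (t ^ (q - 1)) with hW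
  have hWT : W ≤ ENNReal.ofReal CW * T := MS_W f hf hq hγ
  have hgood : ∀ t : ℝ, 0 < t → ν (32 * t) ≤ ENNReal.ofReal (15 * Co * γ) * ν t +
      volume (MS (fun x => ‖f x‖ₑ ^ 2) (2 * γ * t)) := by
    intro t ht
    have := good_lambda F hF hFI f hCo hosc hγ hγ2 (t := 2 * t) (by positivity)
    rw [show 16 * (2 * t) = 32 * t by ring, show 2 * t / 2 = t by ring, show γ * (2 * t) = 2 * γ * t by ring] at this
    exact this
  have hpm : Measurable fun t : ℝ => ENNReal.ofReal (t ^ (q - 1)) := by fun_prop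
  set I : ℝ → ℝ≥0∞ := fun L => ∫⁻ t in Ioc 0 L, ν t * ENNReal.ofReal (t ^ (q - 1)) with hI
  have hIfin : ∀ L, 0 < L → I L < ∞ := by
    intro L hL
    have h1 : I L ≤ ∫⁻ t in Ioc 0 L, (10 * ∫⁻ x, ‖F x‖ₑ ^ 2) * ENNReal.ofReal (t ^ (q - 2)) := by
      refine setLIntegral_mono' measurableSet_Ioc fun t ht => ?_
      have ht0 : 0 < t := ht.1
      calc _ ≤ (ENNReal.ofReal (10 / t) * ∫⁻ x, ‖F x‖ₑ ^ 2) * ENNReal.ofReal (t ^ (q - 1)) := by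
            gcongr; exact MS_weak _ ht0
        _ = (∫⁻ x, ‖F x‖ₑ ^ 2) * (ENNReal.ofReal (10 / t) * ENNReal.ofReal (t ^ (q - 1))) := by ring
        _ = (∫⁻ x, ‖F x‖ₑ ^ 2) * (ENNReal.ofReal 10 * ENNReal.ofReal (t ^ (q - 2))) := by
            rw [← ENNReal.ofReal_mul (by positivity), ← ENNReal.ofReal_mul (by positivity),
              show q - 2 = q - 1 - 1 by ring, Real.rpow_sub_one ht0.ne' (q - 1)]
            generalize t ^ (q - 1) = y
            congr 2; field_simp
        _ = _ := by rw [ENNReal.ofReal_ofNat]; ring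
    refine h1.trans_lt ?_
    rw [lintegral_const_mul' _ _ (ENNReal.mul_ne_top (by norm_num) hFI.ne)]
    refine ENNReal.mul_lt_top (ENNReal.mul_lt_top (by norm_num) hFI) ?_
    have h2 := (intervalIntegral.intervalIntegrable_rpow' (a := 0) (b := L) (r := q - 2) (by linarith)).1
    exact h2.lintegral_lt_top
  have hIle : ∀ L, 0 < L → I (32 * L) ≤ ENNReal.ofReal (2 * (32 ^ q * CW)) * T := by
    intro L hL
    have h1 : I (32 * L) ≤ ENNReal.ofReal (1 / 2) * I (32 * L) + ENNReal.ofReal (32 ^ q) * W := by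
      have h2 : I (32 * L) = ENNReal.ofReal (32 ^ q) * ∫⁻ t in Ioc 0 L, ν (32 * t) * ENNReal.ofReal (t ^ (q - 1)) := by
        simp only [hI]
        rw [setLIntegral_scale (fun t => ν t * ENNReal.ofReal (t ^ (q - 1))) (hνm.mul hpm) (by norm_num : (0:ℝ) < 32), ← lintegral_const_mul' _ _ ENNReal.ofReal_ne_top,
          ← lintegral_const_mul' _ _ ENNReal.ofReal_ne_top]
        refine setLIntegral_congr_fun measurableSet_Ioc fun t ht => ?_
        have ht0 : 0 < t := ht.1
        rw [Real.mul_rpow (by norm_num) ht0.le, Real.rpow_sub_one (by norm_num : (32:ℝ) ≠ 0),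
          mul_left_comm, ← ENNReal.ofReal_mul (by norm_num), mul_left_comm (ENNReal.ofReal (32 ^ q)),
          ← ENNReal.ofReal_mul (by positivity)]
        congr 2
        field_simp
      calc I (32 * L) = _ := h2
        _ ≤ ENNReal.ofReal (32 ^ q) * ∫⁻ t in Ioc 0 L, (ENNReal.ofReal (15 * Co * γ) * (ν t * ENNReal.ofReal (t ^ (q - 1))) +
              volume (MS (fun x => ‖f x‖ₑ ^ 2) (2 * γ * t)) * ENNReal.ofReal (t ^ (q - 1))) := by
            gcongr ENNReal.ofReal (32 ^ q) * ?_
            refine setLIntegral_mono' measurableSet_Ioc fun t ht => ?_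
            rw [← mul_assoc, ← add_mul]
            gcongr
            exact hgood t ht.1
        _ = ENNReal.ofReal (32 ^ q) * (ENNReal.ofReal (15 * Co * γ) * I L +
              ∫⁻ t in Ioc 0 L, volume (MS (fun x => ‖f x‖ₑ ^ 2) (2 * γ * t)) * ENNReal.ofReal (t ^ (q - 1))) := by
            rw [lintegral_add_left (f := fun t => ENNReal.ofReal (15 * Co * γ) * (ν t * ENNReal.ofReal (t ^ (q - 1)))) ((hνm.mul hpm).const_mul _), lintegral_const_mul' _ _ ENNReal.ofReal_ne_top]
        _ ≤ ENNReal.ofReal (32 ^ q) * (ENNReal.ofReal (15 * Co * γ) * I (32 * L) + W) := by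
            gcongr
            · refine lintegral_mono_set (Ioc_subset_Ioc_right (by linarith))
            · exact lintegral_mono_set Ioc_subset_Ioi_self
        _ = ENNReal.ofReal (32 ^ q * (15 * Co * γ)) * I (32 * L) + ENNReal.ofReal (32 ^ q) * W := by
            rw [mul_add, ← mul_assoc, ← ENNReal.ofReal_mul (by positivity)]
        _ ≤ _ := by gcongr
    have hfin := (hIfin (32 * L) (by positivity)).ne
    have h3 : I (32 * L) = ENNReal.ofReal (1 / 2) * I (32 * L) + ENNReal.ofReal (1 / 2) * I (32 * L) := by
      rw [← add_mul, ← ENNReal.ofReal_add (by norm_num) (by norm_num)]; norm_num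
    have h4 : ENNReal.ofReal (1 / 2) * I (32 * L) ≤ ENNReal.ofReal (32 ^ q) * W := by
      refine (ENNReal.add_le_add_iff_left (a := ENNReal.ofReal (1 / 2) * I (32 * L)) ?_).1 ?_
      · exact ENNReal.mul_ne_top ENNReal.ofReal_ne_top hfin
      · rw [← h3]; exact h1
    calc I (32 * L) = ENNReal.ofReal 2 * (ENNReal.ofReal (1 / 2) * I (32 * L)) := by
          rw [← mul_assoc, ← ENNReal.ofReal_mul (by norm_num)]; norm_num
      _ ≤ ENNReal.ofReal 2 * (ENNReal.ofReal (32 ^ q) * (ENNReal.ofReal CW * T)) := by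
          exact mul_le_mul_right (h4.trans (mul_le_mul_right hWT _)) _
      _ = _ := by
          rw [← mul_assoc, ← mul_assoc, ← ENNReal.ofReal_mul (by norm_num), ← ENNReal.ofReal_mul (by positivity), mul_assoc]
  have hIall : ∫⁻ t in Ioi (0:ℝ), ν t * ENNReal.ofReal (t ^ (q - 1)) ≤ ENNReal.ofReal (2 * (32 ^ q * CW)) * T := by
    have hU : Ioi (0:ℝ) = ⋃ n : ℕ, Ioc 0 (32 * ((n:ℝ) + 1)) := by
      ext t
      simp only [mem_Ioi, mem_iUnion, mem_Ioc]
      constructor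
      · intro h
        obtain ⟨n, hn⟩ := exists_nat_ge t
        exact ⟨n, h, by linarith⟩
      · rintro ⟨n, h, _⟩; exact h
    rw [hU, setLIntegral_iUnion_of_directed _ (directed_of_isDirected_le fun n k hnk => by
      apply Ioc_subset_Ioc_right
      have : (n:ℝ) ≤ k := by exact_mod_cast hnk
      linarith)]
    exact iSup_le fun n => hIle _ (by positivity)
  rw [lintegral_rpow_eq_lintegral_meas_lt_mul volume (f := fun x => ‖F x‖ ^ 2) (Filter.Eventually.of_forall fun x => by positivity)
    (hF.norm.pow 2).measurable.aemeasurable (by linarith), ENNReal.ofReal_mul (by linarith), mul_assoc]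
  gcongr
  refine le_trans (setLIntegral_mono' measurableSet_Ioi fun t ht => ?_) hIall
  have ht : 0 < t := ht
  gcongr
  refine measure_mono fun x hx => ?_
  simp only [mem_ofPred_eq] at hx
  have hcont : ContinuousAt (fun x => ‖F x‖ ^ 2) x := (hF.norm.pow 2).continuousAt
  have hev := hcont.eventually (lt_mem_nhds hx)
  obtain ⟨δ, hδ, hball⟩ := Metric.eventually_nhds_iff.1 hev
  refine ⟨δ / 2, by positivity, ?_⟩
  calc ENNReal.ofReal (t * (δ / 2)) < ENNReal.ofReal (t * δ) := by
        rw [ENNReal.ofReal_lt_ofReal_iff (by positivity)]; nlinarith [mul_pos ht hδ]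
    _ = ∫⁻ y in Metric.closedBall x (δ / 2), ENNReal.ofReal t := by
        rw [lintegral_const, Measure.restrict_apply_univ, Real.volume_closedBall, ← ENNReal.ofReal_mul ht.le]
        congr 1; ring
    _ ≤ _ := by
        refine setLIntegral_mono' Metric.isClosed_closedBall.measurableSet fun y hy => ?_
        rw [← ofReal_norm, ← ENNReal.ofReal_pow (norm_nonneg _)]
        refine ENNReal.ofReal_le_ofReal (hball ?_).le
        rw [Metric.mem_closedBall] at hy
        linarith

theorem euclid_enorm_sq {N : ℕ} (v : EuclideanSpace ℂ (Fin N)) : ‖v‖ₑ ^ 2 = ∑ m, ‖v m‖ₑ ^ 2 := by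
  rw [← ofReal_norm, ← ENNReal.ofReal_pow (norm_nonneg _), EuclideanSpace.norm_sq_eq,
    ENNReal.ofReal_sum_of_nonneg (fun _ _ => by positivity)]
  refine Finset.sum_congr rfl fun m _ => ?_
  rw [← ofReal_norm, ← ENNReal.ofReal_pow (norm_nonneg _)]

theorem Vop_l2 (φ : 𝓢(ℝ, ℂ)) (hφ : GoodS φ) : ∃ B : ℝ, 0 < B ∧
    ∀ (N : ℕ) (a ℓ : Fin N → ℝ) (hℓ : ∀ m, 0 < ℓ m)
    (_ : ∀ m n, m ≠ n → Disjoint (Icc (a m) (a m + ℓ m)) (Icc (a n) (a n + ℓ n)))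
    (h : ℝ → ℂ) (_ : MemLp h 2),
    ∫⁻ x, ‖Vop φ a ℓ hℓ h 0 x‖ₑ ^ 2 ≤ ENNReal.ofReal B * ∫⁻ x, ‖h x‖ₑ ^ 2 := by
  set B := SchwartzMap.seminorm ℝ 0 0 (𝓕 φ) + 1 with hB
  have hB0 : 0 < B := by positivity
  refine ⟨B ^ 2, by positivity, fun N a ℓ hℓ hd h hh => ?_⟩
  refine le_trans (le_of_eq ?_) (l2_general φ hφ a ℓ hℓ hd B (fun ξ => ?_) h hh)
  · refine lintegral_congr fun x => ?_
    rw [euclid_enorm_sq]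
    refine Finset.sum_congr rfl fun m _ => ?_
    rw [Vop_coord]
    have : ∀ z : ℂ, ‖e2pi (-(a m * x)) * z‖ₑ = ‖z‖ₑ := by
      intro z
      rw [← ofReal_norm, ← ofReal_norm, norm_mul, norm_e2pi, one_mul]
    rw [this]
    simp
  · have := SchwartzMap.norm_le_seminorm ℝ (𝓕 φ) ξ
    linarith

theorem Vop_continuous (φ : 𝓢(ℝ, ℂ)) {N : ℕ} (a ℓ : Fin N → ℝ) (hℓ : ∀ m, 0 < ℓ m) {h : ℝ → ℂ}
    (hh : Tame h) (n : ℕ) : Continuous (Vop φ a ℓ hℓ h n) :=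
  continuous_iff_continuousAt.2 fun x => (Vop_hasDerivAt φ a ℓ hℓ hh n x).continuousAt

theorem lintegral_indicator_sq {h : ℝ → ℂ} {s : Set ℝ} (hs : MeasurableSet s) :
    ∫⁻ x, ‖s.indicator h x‖ₑ ^ 2 = ∫⁻ x in s, ‖h x‖ₑ ^ 2 := by
  rw [← lintegral_indicator hs]
  refine lintegral_congr fun x => ?_
  by_cases hx : x ∈ s <;> simp [hx]

theorem geom_half (K : ℕ) : ∑ k ∈ Finset.range K, ((2:ℝ) ^ k)⁻¹ ≤ 2 := by
  have := sum_geometric_two_le K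
  simpa [one_div, inv_pow] using this

theorem Vop_osc (φ : 𝓢(ℝ, ℂ)) (hφ : GoodS φ) : ∃ Co : ℝ, 0 < Co ∧
    ∀ (N : ℕ) (a ℓ : Fin N → ℝ) (hℓ : ∀ m, 0 < ℓ m)
    (_ : ∀ m n, m ≠ n → Disjoint (Icc (a m) (a m + ℓ m)) (Icc (a n) (a n + ℓ n)))
    (f : ℝ → ℂ) (_ : Tame f) (c r D : ℝ), 0 < r → 0 ≤ D →
      (∀ k : ℕ, ∫⁻ x in Metric.closedBall c (2 ^ k * r), ‖f x‖ₑ ^ 2 ≤ ENNReal.ofReal (D * (2 ^ k * r))) →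
      ∃ e, ∫⁻ x in Metric.closedBall c r, ‖Vop φ a ℓ hℓ f 0 x - e‖ₑ ^ 2 ≤ ENNReal.ofReal (Co * D * r) := by
  obtain ⟨B, hB, hl2⟩ := Vop_l2 φ hφ
  obtain ⟨C, hC, hfar⟩ := far_lemma φ hφ 1 le_rfl
  refine ⟨4 * B + 32 * C ^ 2, by positivity, ?_⟩
  intro N a ℓ hℓ hd f hf c r D hr hD hk
  have hQm : MeasurableSet (Metric.closedBall c (2 * r)) := Metric.isClosed_closedBall.measurableSet
  set Q := Metric.closedBall c (2 * r) with hQ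
  have hf1 := hf.indicator hQm
  have hf2 := hf.indicator hQm.compl
  have hsplit : ∀ x, Vop φ a ℓ hℓ f 0 x = Vop φ a ℓ hℓ (Q.indicator f) 0 x + Vop φ a ℓ hℓ (Qᶜ.indicator f) 0 x := by
    intro x
    rw [← Vop_add φ a ℓ hℓ hf1 hf2]
    congr 1
    ext t
    by_cases ht : t ∈ Q <;> simp [ht]
  have hloc0 : ∫⁻ x, ‖Q.indicator f x‖ₑ ^ 2 ≤ ENNReal.ofReal (D * (2 * r)) := by
    rw [lintegral_indicator_sq hQm]
    simpa using hk 1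
  have hloc := hl2 N a ℓ hℓ hd _ (memLp_two_of_lintegral hf1.1 (hloc0.trans_lt ENNReal.ofReal_lt_top))
  obtain ⟨P, hPd, hP⟩ := hfar N a ℓ hℓ hd _ hf2 c r hr (fun _ => √(2 * D)) (fun _ => by positivity) (2 * √(2 * D))
    (fun t ht => by simp [hQ, ht])
    (fun k => by
      calc _ ≤ ∫⁻ t in Metric.closedBall c (2 ^ (k + 1) * r), ‖f t‖ₑ ^ 2 := by
            refine lintegral_mono fun t => ?_
            by_cases ht : t ∈ Q <;> simp [ht]
        _ ≤ _ := hk (k + 1)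
        _ = _ := by
            rw [Real.sq_sqrt (by positivity)]; congr 1; ring)
    (fun K => by
      rw [← Finset.sum_mul]
      gcongr
      simpa using geom_half K)
  set e : EuclideanSpace ℂ (Fin N) := WithLp.toLp 2 fun m => (P m).coeff 0 with he
  have hPe : ∀ x : ℝ, (WithLp.toLp 2 (fun m => (P m).eval (x : ℂ)) : EuclideanSpace ℂ (Fin N)) = e := by
    intro x
    rw [he]
    congr 1
    ext m
    have : (P m).degree ≤ 0 := by
      have := hPd m
      exact Order.le_of_lt_succ this
    rw [Polynomial.eq_C_of_degree_le_zero this]; simp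
  refine ⟨e, ?_⟩
  calc _ ≤ ∫⁻ x in Metric.closedBall c r, (2 * ‖Vop φ a ℓ hℓ (Q.indicator f) 0 x‖ₑ ^ 2 + ENNReal.ofReal (16 * C ^ 2 * D)) := by
        refine setLIntegral_mono' Metric.isClosed_closedBall.measurableSet fun x hx => ?_
        refine (enorm_sq_add_le _ (Vop φ a ℓ hℓ (Qᶜ.indicator f) 0 x - e)).trans ?_
        rw [hsplit x]
        have h1 : Vop φ a ℓ hℓ (Q.indicator f) 0 x + Vop φ a ℓ hℓ (Qᶜ.indicator f) 0 x - e -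
          (Vop φ a ℓ hℓ (Qᶜ.indicator f) 0 x - e) = Vop φ a ℓ hℓ (Q.indicator f) 0 x := by abel
        rw [h1]
        gcongr
        have h2 := hP x hx
        rw [hPe] at h2
        have h3 : 2 * ‖Vop φ a ℓ hℓ (Qᶜ.indicator f) 0 x - e‖ ^ 2 ≤ 16 * C ^ 2 * D := by
          calc _ ≤ 2 * (C * (2 * √(2 * D))) ^ 2 := by gcongr
            _ = 8 * C ^ 2 * √(2 * D) ^ 2 := by ring
            _ = _ := by rw [Real.sq_sqrt (by positivity)]; ring
        refine le_trans (le_of_eq ?_) (ENNReal.ofReal_le_ofReal h3)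
        rw [ENNReal.ofReal_mul (by norm_num), ENNReal.ofReal_pow (norm_nonneg _), ofReal_norm]
        simp
    _ = (2 * ∫⁻ x in Metric.closedBall c r, ‖Vop φ a ℓ hℓ (Q.indicator f) 0 x‖ₑ ^ 2) +
          ENNReal.ofReal (16 * C ^ 2 * D) * ENNReal.ofReal (2 * r) := by
        rw [lintegral_add_right _ measurable_const, lintegral_const, Measure.restrict_apply_univ,
          Real.volume_closedBall, lintegral_const_mul' _ _ (by norm_num)]
    _ ≤ (2 * (ENNReal.ofReal B * ENNReal.ofReal (D * (2 * r)))) + ENNReal.ofReal (16 * C ^ 2 * D) * ENNReal.ofReal (2 * r) := by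
        gcongr
        calc _ ≤ _ := setLIntegral_le_lintegral _ _
          _ ≤ _ := hloc
          _ ≤ _ := by gcongr
    _ = _ := by
        rw [← ENNReal.ofReal_mul hB.le, ← ENNReal.ofReal_mul (by positivity),
          show (2:ℝ≥0∞) = ENNReal.ofReal 2 by simp, ← ENNReal.ofReal_mul (by norm_num), ← ENNReal.ofReal_add (by positivity) (by positivity)]
        congr 1; ring

theorem Vop_lp (φ : 𝓢(ℝ, ℂ)) (hφ : GoodS φ) (p : ℝ) (hp : 2 ≤ p) : ∃ C : ℝ, 0 < C ∧
    ∀ (N : ℕ) (a ℓ : Fin N → ℝ) (hℓ : ∀ m, 0 < ℓ m)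
    (_ : ∀ m n, m ≠ n → Disjoint (Icc (a m) (a m + ℓ m)) (Icc (a n) (a n + ℓ n)))
    (f : ℝ → ℂ) (_ : Tame f) (_ : ∫⁻ x, ‖f x‖ₑ ^ 2 < ∞),
    ∫⁻ x, ENNReal.ofReal ((‖Vop φ a ℓ hℓ f 0 x‖ ^ 2) ^ (p / 2)) ≤
      ENNReal.ofReal C * ∫⁻ x, ENNReal.ofReal ((‖f x‖ ^ 2) ^ (p / 2)) := by
  obtain ⟨B, hB, hl2⟩ := Vop_l2 φ hφ
  rcases eq_or_lt_of_le hp with h2 | h2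
  · refine ⟨B, hB, ?_⟩
    intro N a ℓ hℓ hd f hf hfi
    have := hl2 N a ℓ hℓ hd f (memLp_two_of_lintegral hf.1 hfi)
    subst h2
    simpa [ENNReal.ofReal_pow] using this
  · obtain ⟨Co, hCo, hosc⟩ := Vop_osc φ hφ
    obtain ⟨C, hC, habs⟩ := lp_abs (q := p / 2) (by linarith) hCo
    refine ⟨C, hC, ?_⟩
    intro N a ℓ hℓ hd f hf hfi
    exact habs N _ (Vop_continuous φ a ℓ hℓ hf 0)
      ((hl2 N a ℓ hℓ hd f (memLp_two_of_lintegral hf.1 hfi)).trans_lt (ENNReal.mul_lt_top ENNReal.ofReal_lt_top hfi))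
      f hf.1 (hosc N a ℓ hℓ hd f hf)

theorem gram_bound (i : ℕ) : ∃ K : ℝ, 0 < K ∧ ∀ (q : Fin i → ℂ) (j : Fin i),
    ‖q j‖ ≤ K * ∫ u in (-1:ℝ)..1, ‖∑ k, q k * (u:ℂ) ^ (k:ℕ)‖ := by
  set G : Matrix (Fin i) (Fin i) ℂ := fun j k => ∫ u in (-1:ℝ)..1, (u:ℂ) ^ (j:ℕ) * (u:ℂ) ^ (k:ℕ) with hG
  have hGq : ∀ (q : Fin i → ℂ) j, G.mulVec q j = ∫ u in (-1:ℝ)..1, (u:ℂ) ^ (j:ℕ) * ∑ k, q k * (u:ℂ) ^ (k:ℕ) := by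
    intro q j
    simp only [Matrix.mulVec, dotProduct, hG]
    simp_rw [Finset.mul_sum]
    rw [intervalIntegral.integral_finset_sum]
    · refine Finset.sum_congr rfl fun k _ => ?_
      rw [← intervalIntegral.integral_mul_const]
      congr 1; ext u; ring
    · intro k _
      apply Continuous.intervalIntegrable
      fun_prop
  have hinj : LinearMap.ker (Matrix.toLin' G) = ⊥ := by
    rw [LinearMap.ker_eq_bot']
    intro q hq
    rw [Matrix.toLin'_apply] at hq
    set Q : ℝ → ℂ := fun u => ∑ k, q k * (u:ℂ) ^ (k:ℕ) with hQ
    have hQc : Continuous Q := by fun_prop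
    have h1 : ∑ j, starRingEnd ℂ (q j) * G.mulVec q j = 0 := by simp [hq]
    have h2 : ∑ j, starRingEnd ℂ (q j) * G.mulVec q j = ∫ u in (-1:ℝ)..1, ((‖Q u‖ ^ 2 : ℝ) : ℂ) := by
      simp_rw [hGq, ← intervalIntegral.integral_const_mul]
      rw [← intervalIntegral.integral_finset_sum]
      · congr 1; ext u
        have : (((‖Q u‖ ^ 2 : ℝ)) : ℂ) = starRingEnd ℂ (Q u) * Q u := by
          rw [← Complex.normSq_eq_conj_mul_self, Complex.normSq_eq_norm_sq]
        rw [this]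
        simp only [hQ, map_sum, map_mul, map_pow, Complex.conj_ofReal]
        rw [Finset.sum_mul]
        refine Finset.sum_congr rfl fun j _ => by ring
      · intro j _
        apply Continuous.intervalIntegrable
        fun_prop
    rw [h1, intervalIntegral.integral_ofReal] at h2
    have h3 : ∫ u in (-1:ℝ)..1, ‖Q u‖ ^ 2 = 0 := by exact_mod_cast h2.symm
    have h4 : ∀ u ∈ Icc (-1:ℝ) 1, Q u = 0 := by
      intro u hu
      by_contra hne
      have := intervalIntegral.integral_pos (a := -1) (b := 1) (f := fun u => ‖Q u‖ ^ 2) (by norm_num)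
        (by fun_prop) (fun _ _ => by positivity) ⟨u, hu, by positivity⟩
      linarith
    set p : Polynomial ℂ := ∑ k : Fin i, Polynomial.monomial (k:ℕ) (q k) with hp
    have hev : ∀ u : ℝ, p.eval (u:ℂ) = Q u := by
      intro u
      simp [hp, hQ, Polynomial.eval_finsetSum, Polynomial.eval_monomial]
    have hp0 : p = 0 := by
      apply Polynomial.eq_zero_of_infinite_isRoot
      refine Set.Infinite.mono (s := (fun u : ℝ => (u:ℂ)) '' Icc (-1) 1) ?_ ?_
      · rintro _ ⟨u, hu, rfl⟩
        show p.eval (u:ℂ) = 0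
        rw [hev, h4 u hu]
      · exact (Set.Icc_infinite (by norm_num)).image Complex.ofReal_injective.injOn
    ext j
    have : p.coeff j = q j := by
      simp [hp, Polynomial.finsetSum_coeff, Polynomial.coeff_monomial, Fin.val_inj]
    rw [← this, hp0]; simp
  obtain ⟨K, hK, hanti⟩ := (Matrix.toLin' G).exists_antilipschitzWith hinj
  refine ⟨K, by exact_mod_cast hK, fun q j => ?_⟩
  have h1 : ‖q‖ ≤ K * ‖Matrix.toLin' G q‖ := by
    have := hanti.le_mul_dist q 0
    simpa using this
  refine (norm_le_pi_norm q j).trans (h1.trans ?_)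
  gcongr
  rw [pi_norm_le_iff_of_nonneg (intervalIntegral.integral_nonneg (by norm_num) fun _ _ => norm_nonneg _)]
  intro j
  rw [Matrix.toLin'_apply, hGq]
  refine (intervalIntegral.norm_integral_le_integral_norm (by norm_num)).trans ?_
  refine intervalIntegral.integral_mono_on (by norm_num) ?_ ?_ ?_
  · apply Continuous.intervalIntegrable; fun_prop
  · apply Continuous.intervalIntegrable; fun_prop
  · intro u hu
    rw [norm_mul, norm_pow]
    have : ‖(u:ℂ)‖ ^ (j:ℕ) ≤ 1 := by
      apply pow_le_one₀ (norm_nonneg _)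
      rw [Complex.norm_real, Real.norm_eq_abs, abs_le]; exact hu
    exact mul_le_of_le_one_left (norm_nonneg _) this

theorem poly_sup (i : ℕ) (hi : 1 ≤ i) : ∃ K : ℝ, 0 < K ∧ ∀ (P : Polynomial ℂ) (_ : P.degree < (i : WithBot ℕ))
    (c ρ D : ℝ) (_ : 0 < ρ) (_ : 0 < D)
    (_ : ∫⁻ t in Metric.closedBall c ρ, ‖P.eval (t:ℂ)‖ₑ ^ 2 ≤ ENNReal.ofReal (ρ * D ^ 2))
    (R : ℝ) (_ : 1 ≤ R) (x : ℝ) (_ : x ∈ Metric.closedBall c (R * ρ)),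
    ‖P.eval (x:ℂ)‖ ≤ K * R ^ (i - 1) * D := by
  obtain ⟨K, hK, hg⟩ := gram_bound i
  have hi0 : (0:ℝ) < i := by exact_mod_cast hi
  refine ⟨i * K * 2, by positivity, ?_⟩
  intro P hP c ρ D hρ hD hIntg R hR x hx
  set Q := P.comp (Polynomial.C (ρ:ℂ) * Polynomial.X + Polynomial.C (c:ℂ)) with hQ
  have hQd : Q.natDegree < i := by
    refine lt_of_le_of_lt Polynomial.natDegree_comp_le ?_
    have h1 : (Polynomial.C (ρ:ℂ) * Polynomial.X + Polynomial.C (c:ℂ)).natDegree ≤ 1 :=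
      Polynomial.natDegree_linear_le
    have h2 : P.natDegree < i := by
      rcases eq_or_ne P 0 with h | h
      · subst h; rw [Polynomial.natDegree_zero]; omega
      · exact (Polynomial.natDegree_lt_iff_degree_lt h).2 hP
    calc _ ≤ P.natDegree * 1 := by gcongr
      _ < i := by simpa using h2
  have hQev : ∀ u : ℝ, Q.eval (u:ℂ) = P.eval ((ρ * u + c : ℝ) : ℂ) := by
    intro u; simp [hQ, Polynomial.eval_comp]
  have hQsum : ∀ u : ℝ, Q.eval (u:ℂ) = ∑ k : Fin i, Q.coeff k * (u:ℂ) ^ (k:ℕ) := by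
    intro u
    rw [Polynomial.eval_eq_sum_range' hQd, Finset.sum_range]
  have hPc : Continuous fun t : ℝ => P.eval (t:ℂ) := P.continuous.comp Complex.continuous_ofReal
  have hQc : Continuous fun t : ℝ => Q.eval (t:ℂ) := Q.continuous.comp Complex.continuous_ofReal
  have hsq : ∫ u in (-1:ℝ)..1, ‖Q.eval (u:ℂ)‖ ^ 2 ≤ D ^ 2 := by
    have h1 : ∫ t, ‖(Metric.closedBall c ρ).indicator (fun t : ℝ => P.eval (t:ℂ)) t‖ ^ 2 ≤ ρ * D ^ 2 := by
      apply integral_sq_le_of_lintegral (hPc.measurable.indicator Metric.isClosed_closedBall.measurableSet) (by positivity)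
      rw [lintegral_indicator_sq Metric.isClosed_closedBall.measurableSet]
      exact hIntg
    have h2 : ∫ t, ‖(Metric.closedBall c ρ).indicator (fun t : ℝ => P.eval (t:ℂ)) t‖ ^ 2 =
        ∫ t in (c - ρ)..(c + ρ), ‖P.eval (t:ℂ)‖ ^ 2 := by
      rw [intervalIntegral.integral_of_le (by linarith), ← integral_Icc_eq_integral_Ioc, ← Real.closedBall_eq_Icc,
        ← integral_indicator Metric.isClosed_closedBall.measurableSet]
      congr 1; ext t
      by_cases ht : t ∈ Metric.closedBall c ρ
      · rw [indicator_of_mem ht, indicator_of_mem ht]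
      · rw [indicator_of_notMem ht, indicator_of_notMem ht]; simp
    have h3 : ∫ u in (-1:ℝ)..1, ‖Q.eval (u:ℂ)‖ ^ 2 = ρ⁻¹ * ∫ t in (c - ρ)..(c + ρ), ‖P.eval (t:ℂ)‖ ^ 2 := by
      simp_rw [hQev]
      rw [intervalIntegral.integral_comp_mul_add (fun t : ℝ => ‖P.eval (t:ℂ)‖ ^ 2) hρ.ne' c, smul_eq_mul]
      congr 2 <;> ring
    rw [h3, ← h2, inv_mul_le_iff₀ hρ]
    exact h1
  have hL1 : ∫ u in (-1:ℝ)..1, ‖Q.eval (u:ℂ)‖ ≤ 2 * D := by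
    calc _ ≤ ∫ u in (-1:ℝ)..1, (D / 2 + (2 * D)⁻¹ * ‖Q.eval (u:ℂ)‖ ^ 2) := by
          refine intervalIntegral.integral_mono_on (by norm_num) ?_ ?_ ?_
          · exact hQc.norm.intervalIntegrable _ _
          · apply Continuous.intervalIntegrable; fun_prop
          · intro u _
            set y := ‖Q.eval (u:ℂ)‖
            have : D / 2 + (2 * D)⁻¹ * y ^ 2 - y = (2 * D)⁻¹ * (D - y) ^ 2 := by field_simp; ring
            have h2 : 0 ≤ (2 * D)⁻¹ * (D - y) ^ 2 := by positivity
            linarith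
      _ = D + (2 * D)⁻¹ * ∫ u in (-1:ℝ)..1, ‖Q.eval (u:ℂ)‖ ^ 2 := by
          rw [intervalIntegral.integral_add (by simp) (by apply Continuous.intervalIntegrable; fun_prop),
            intervalIntegral.integral_const_mul]
          simp; ring
      _ ≤ D + (2 * D)⁻¹ * D ^ 2 := by gcongr
      _ ≤ 2 * D := by field_simp; norm_num
  have hcoef : ∀ k : Fin i, ‖Q.coeff k‖ ≤ K * (2 * D) := by
    intro k
    refine (hg (fun k => Q.coeff k) k).trans ?_
    simp_rw [← hQsum]
    gcongr
  set u := (x - c) / ρ with hu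
  have hxu : x = ρ * u + c := by rw [hu]; field_simp; ring
  have hue : |u| ≤ R := by
    rw [Metric.mem_closedBall, Real.dist_eq] at hx
    rw [hu, abs_div, abs_of_pos hρ, div_le_iff₀ hρ]; exact hx
  rw [hxu, ← hQev, hQsum]
  calc _ ≤ ∑ k : Fin i, ‖Q.coeff k * (u:ℂ) ^ (k:ℕ)‖ := norm_sum_le _ _
    _ ≤ ∑ k : Fin i, K * (2 * D) * R ^ (i - 1) := by
        refine Finset.sum_le_sum fun k _ => ?_
        rw [norm_mul, norm_pow, Complex.norm_real, Real.norm_eq_abs]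
        have : |u| ^ (k:ℕ) ≤ R ^ (i - 1) := by
          calc |u| ^ (k:ℕ) ≤ R ^ (k:ℕ) := by gcongr
            _ ≤ _ := pow_le_pow_right₀ hR (by have := k.2; omega)
        exact mul_le_mul (hcoef k) this (by positivity) (by positivity)
    _ = _ := by simp; ring

theorem poly_growth (i : ℕ) (hi : 1 ≤ i) (w : ℝ) (hw : 1 ≤ w) : ∃ C : ℝ, 0 < C ∧
    ∀ (f : ℝ → ℂ) (_ : Measurable f) (c R E : ℝ) (_ : 0 < R) (_ : 0 < E) (P : ℕ → Polynomial ℂ)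
    (_ : ∀ k, (P k).degree < (i : WithBot ℕ))
    (_ : ∀ k : ℕ, ∫⁻ t in Metric.closedBall c (2 ^ k * R), ‖f t - (P k).eval (t:ℂ)‖ₑ ^ 2 ≤
      ENNReal.ofReal (2 ^ k * R * (w ^ k * E) ^ 2)) (k : ℕ),
    ∫⁻ t in Metric.closedBall c (2 ^ k * R), ‖f t - (P 0).eval (t:ℂ)‖ₑ ^ 2 ≤
      ENNReal.ofReal (2 ^ k * R * (C * ((k + 1) * (max w (2 ^ (i - 1))) ^ k * E)) ^ 2) := by
  obtain ⟨K, hK, hsup⟩ := poly_sup i hi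
  have hw0 : 0 < w := by linarith
  refine ⟨2 * (1 + 3 * K * w), by positivity, ?_⟩
  intro f hf c R E hR hE P hP hIntg k
  set β := max w (2 ^ (i - 1)) with hβ
  have hwβ : w ≤ β := le_max_left _ _
  have h2β : (2:ℝ) ^ (i - 1) ≤ β := le_max_right _ _
  have hβ0 : 0 < β := by linarith
  have hPm : ∀ k, Measurable fun t : ℝ => (P k).eval (t:ℂ) := fun k =>
    ((P k).continuous.comp Complex.continuous_ofReal).measurable
  -- one step differences
  have hD : ∀ n, n < k → ∀ x ∈ Metric.closedBall c (2 ^ k * R), ‖(P (n + 1)).eval (x:ℂ) - (P n).eval (x:ℂ)‖ ≤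
      3 * K * w * β ^ k * E := by
    intro n hn x hx
    have hdeg : (P (n + 1) - P n).degree < (i : WithBot ℕ) :=
      lt_of_le_of_lt (Polynomial.degree_sub_le _ _) (max_lt (hP _) (hP _))
    have hI : ∫⁻ t in Metric.closedBall c (2 ^ n * R), ‖(P (n + 1) - P n).eval (t:ℂ)‖ₑ ^ 2 ≤
        ENNReal.ofReal (2 ^ n * R * (3 * w * w ^ n * E) ^ 2) := by
      calc _ ≤ ∫⁻ t in Metric.closedBall c (2 ^ n * R), (2 * ‖f t - (P (n + 1)).eval (t:ℂ)‖ₑ ^ 2 +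
              2 * ‖f t - (P n).eval (t:ℂ)‖ₑ ^ 2) := by
            refine lintegral_mono fun t => ?_
            refine (enorm_sq_add_le _ (f t - (P n).eval (t:ℂ))).trans (le_of_eq ?_)
            congr 3
            rw [← enorm_neg]; congr 1
            rw [Polynomial.eval_sub]; ring
        _ = (2 * ∫⁻ t in Metric.closedBall c (2 ^ n * R), ‖f t - (P (n + 1)).eval (t:ℂ)‖ₑ ^ 2) +
              2 * ∫⁻ t in Metric.closedBall c (2 ^ n * R), ‖f t - (P n).eval (t:ℂ)‖ₑ ^ 2 := by
            rw [lintegral_add_left (f := fun t : ℝ => 2 * ‖f t - (P (n + 1)).eval (t:ℂ)‖ₑ ^ 2) (((hf.sub (hPm _)).enorm.pow_const 2).const_mul 2),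
              lintegral_const_mul' _ _ (by norm_num), lintegral_const_mul' _ _ (by norm_num)]
        _ ≤ 2 * ENNReal.ofReal (2 ^ (n + 1) * R * (w ^ (n + 1) * E) ^ 2) + 2 * ENNReal.ofReal (2 ^ n * R * (w ^ n * E) ^ 2) := by
            gcongr
            · refine le_trans (lintegral_mono_set (Metric.closedBall_subset_closedBall ?_)) (hIntg (n + 1))
              gcongr
              · norm_num
              · omega
            · exact hIntg n
        _ = ENNReal.ofReal (2 * (2 ^ (n + 1) * R * (w ^ (n + 1) * E) ^ 2) + 2 * (2 ^ n * R * (w ^ n * E) ^ 2)) := by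
            rw [ENNReal.ofReal_add (by positivity) (by positivity), ENNReal.ofReal_mul (by norm_num : (0:ℝ) ≤ 2),
              ENNReal.ofReal_mul (by norm_num : (0:ℝ) ≤ 2)]
            simp
        _ ≤ _ := by
            apply ENNReal.ofReal_le_ofReal
            have h1 : 2 * (2 ^ (n + 1) * R * (w ^ (n + 1) * E) ^ 2) + 2 * (2 ^ n * R * (w ^ n * E) ^ 2) =
              2 ^ n * R * (w ^ n * E) ^ 2 * (4 * w ^ 2 + 2) := by ring
            have h2 : 2 ^ n * R * (3 * w * w ^ n * E) ^ 2 = 2 ^ n * R * (w ^ n * E) ^ 2 * (9 * w ^ 2) := by ring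
            rw [h1, h2]
            gcongr
            nlinarith
    have := hsup _ hdeg c (2 ^ n * R) (3 * w * w ^ n * E) (by positivity) (by positivity) hI (2 ^ (k - n))
      (one_le_pow₀ (by norm_num)) x (by
        rw [← mul_assoc, ← pow_add, Nat.sub_add_cancel hn.le]; exact hx)
    rw [Polynomial.eval_sub] at this
    refine this.trans ?_
    calc K * (2 ^ (k - n)) ^ (i - 1) * (3 * w * w ^ n * E) = 3 * K * w * ((2 ^ (i - 1)) ^ (k - n) * w ^ n) * E := by
          rw [← pow_mul, ← pow_mul, mul_comm (k - n)]; ring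
      _ ≤ 3 * K * w * (β ^ (k - n) * β ^ n) * E := by gcongr
      _ = _ := by rw [← pow_add, Nat.sub_add_cancel hn.le]
  have hT : ∀ x ∈ Metric.closedBall c (2 ^ k * R), ‖(P k).eval (x:ℂ) - (P 0).eval (x:ℂ)‖ ≤
      k * (3 * K * w * β ^ k * E) := by
    intro x hx
    rw [← Finset.sum_range_sub (fun n => (P n).eval (x:ℂ))]
    refine (norm_sum_le _ _).trans ?_
    refine (Finset.sum_le_sum fun n hn => hD n (Finset.mem_range.1 hn) x hx).trans (le_of_eq ?_)
    simp
  set Z := (k:ℝ) * (3 * K * w * β ^ k * E) with hZ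
  have hZ0 : 0 ≤ Z := by positivity
  calc _ ≤ ∫⁻ t in Metric.closedBall c (2 ^ k * R), (2 * ‖f t - (P k).eval (t:ℂ)‖ₑ ^ 2 + ENNReal.ofReal (2 * Z ^ 2)) := by
        refine setLIntegral_mono' Metric.isClosed_closedBall.measurableSet fun t ht => ?_
        refine (enorm_sq_add_le _ ((P k).eval (t:ℂ) - (P 0).eval (t:ℂ))).trans ?_
        rw [sub_sub_sub_cancel_right]
        gcongr
        rw [ENNReal.ofReal_mul (by norm_num), ← ofReal_norm, ← ENNReal.ofReal_pow (norm_nonneg _)]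
        simp only [ENNReal.ofReal_ofNat]
        gcongr
        exact hT t ht
    _ = (2 * ∫⁻ t in Metric.closedBall c (2 ^ k * R), ‖f t - (P k).eval (t:ℂ)‖ₑ ^ 2) +
          ENNReal.ofReal (2 * Z ^ 2) * ENNReal.ofReal (2 * (2 ^ k * R)) := by
        rw [lintegral_add_right _ measurable_const, lintegral_const, Measure.restrict_apply_univ,
          Real.volume_closedBall, lintegral_const_mul' _ _ (by norm_num)]
    _ ≤ 2 * ENNReal.ofReal (2 ^ k * R * (w ^ k * E) ^ 2) + ENNReal.ofReal (2 * Z ^ 2) * ENNReal.ofReal (2 * (2 ^ k * R)) := by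
        gcongr; exact hIntg k
    _ = ENNReal.ofReal (2 * (2 ^ k * R * (w ^ k * E) ^ 2) + 2 * Z ^ 2 * (2 * (2 ^ k * R))) := by
        rw [ENNReal.ofReal_add (by positivity) (by positivity), ENNReal.ofReal_mul (by norm_num : (0:ℝ) ≤ 2),
          ENNReal.ofReal_mul (by positivity : 0 ≤ 2 * Z ^ 2)]
        simp
    _ ≤ _ := by
        apply ENNReal.ofReal_le_ofReal
        have hk0 : (0:ℝ) ≤ k := by positivity
        calc 2 * (2 ^ k * R * (w ^ k * E) ^ 2) + 2 * Z ^ 2 * (2 * (2 ^ k * R))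
            ≤ 2 * (2 ^ k * R * (β ^ k * E) ^ 2) + 2 * Z ^ 2 * (2 * (2 ^ k * R)) := by gcongr
          _ = 2 ^ k * R * (β ^ k * E) ^ 2 * (2 + 4 * (3 * k * K * w) ^ 2) := by rw [hZ]; ring
          _ ≤ 2 ^ k * R * (β ^ k * E) ^ 2 * (2 * (1 + 3 * K * w) * (k + 1)) ^ 2 := by
              gcongr
              have h0 : 0 ≤ 3 * K * w := by positivity
              set y := 3 * K * w with hy
              have h1 : 3 * (k:ℝ) * K * w = k * y := by rw [hy]; ring
              rw [h1]
              have h2 : (2 * (1 + y) * (k + 1)) ^ 2 = 4 * (1 + k + y + k * y) ^ 2 := by ring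
              rw [h2]
              have h3 : 0 ≤ k * y := by positivity
              nlinarith
          _ = _ := by ring

theorem tame_poly (P : Polynomial ℂ) : Tame (fun t : ℝ => P.eval (t:ℂ)) := by
  induction P using Polynomial.induction_on' with
  | add p q hp hq => simpa using hp.add hq
  | monomial n a =>
    have hc : Continuous fun t : ℝ => (Polynomial.monomial n a).eval (t:ℂ) :=
      (Polynomial.continuous _).comp Complex.continuous_ofReal
    refine ⟨hc.measurable, n + 2, ?_⟩
    refine (integrable_inv_one_add_sq.const_mul ‖a‖).mono' ?_ (Filter.Eventually.of_forall fun t => ?_)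
    · have : Measurable fun t : ℝ => ((1 + |t|) ^ (n + 2))⁻¹ := by fun_prop
      exact (hc.norm.measurable.mul this).aestronglyMeasurable
    · have h0 := abs_nonneg t
      beta_reduce
      rw [Real.norm_of_nonneg (by positivity), Polynomial.eval_monomial, norm_mul, norm_pow, Complex.norm_real,
        Real.norm_eq_abs, mul_assoc]
      gcongr
      rw [pow_add, mul_inv, ← mul_assoc]
      have h1 : |t| ^ n * ((1 + |t|) ^ n)⁻¹ ≤ 1 := by
        rw [← div_eq_mul_inv, div_le_one (by positivity)]
        gcongr; linarith
      calc _ ≤ 1 * ((1 + |t|) ^ 2)⁻¹ := by gcongr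
        _ ≤ _ := by
          rw [one_mul]; gcongr; nlinarith [sq_abs t]

theorem tame_of_growth {h : ℝ → ℂ} (hm : Measurable h) {c R K : ℝ} (hR : 0 < R) (hK : 0 ≤ K) (n : ℕ)
    (hg : ∀ k : ℕ, ∫⁻ t in Metric.closedBall c (2 ^ k * R), ‖h t‖ₑ ^ 2 ≤ ENNReal.ofReal (K * (2 ^ n) ^ k)) :
    Tame h := by
  set M := n + 2 with hM
  refine ⟨hm, M, ?_⟩
  have hmw : Measurable fun t : ℝ => ((1 + |t|) ^ M)⁻¹ := by fun_prop
  refine ⟨(hm.norm.mul hmw).aestronglyMeasurable, ?_⟩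
  set κ := 1 + R + |c| with hκ
  have hκ1 : 1 ≤ κ := by have := abs_nonneg c; linarith
  set A := (2 * κ / R) ^ M with hA
  have hA0 : 0 ≤ A := by positivity
  have hpt : ∀ t, ‖‖h t‖ * ((1 + |t|) ^ M)⁻¹‖ₑ ≤ ∑' k : ℕ, (Metric.closedBall c (2 ^ k * R)).indicator
      (fun t => ENNReal.ofReal (A * ((2:ℝ) ^ M)⁻¹ ^ k) * (1 + ‖h t‖ₑ ^ 2)) t := by
    intro t
    have hex : ∃ k : ℕ, |t - c| ≤ 2 ^ k * R := by
      obtain ⟨k, hk⟩ := pow_unbounded_of_one_lt (|t - c| / R) (by norm_num : (1:ℝ) < 2)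
      exact ⟨k, by rw [div_lt_iff₀ hR] at hk; exact hk.le⟩
    classical
    set k := Nat.find hex with hk
    have hk1 : |t - c| ≤ 2 ^ k * R := Nat.find_spec hex
    have hlow : 2 ^ k * R ≤ 2 * (R + |t - c|) := by
      rcases Nat.eq_zero_or_pos k with h0 | h0
      · rw [h0]; have := abs_nonneg (t - c); simp; linarith
      · have := Nat.find_min hex (m := k - 1) (by omega)
        push Not at this
        have h2 : (2:ℝ) ^ k = 2 * 2 ^ (k - 1) := by rw [← pow_succ', Nat.sub_add_cancel h0]
        rw [h2]; nlinarith
    refine le_trans ?_ (ENNReal.le_tsum k)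
    rw [indicator_of_mem (by rw [Metric.mem_closedBall, Real.dist_eq]; exact hk1)]
    have h0 := abs_nonneg t
    rw [← ofReal_norm, Real.norm_of_nonneg (by positivity)]
    have e1 : (1 + ‖h t‖ₑ ^ 2) = ENNReal.ofReal (1 + ‖h t‖ ^ 2) := by
      rw [ENNReal.ofReal_add (by norm_num) (by positivity), ENNReal.ofReal_pow (norm_nonneg _), ofReal_norm]; simp
    rw [e1, ← ENNReal.ofReal_mul (by positivity), mul_comm]
    apply ENNReal.ofReal_le_ofReal
    have h3 : ‖h t‖ ≤ 1 + ‖h t‖ ^ 2 := by nlinarith [sq_nonneg (‖h t‖ - 1), norm_nonneg (h t)]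
    have h4 : ((1 + |t|) ^ M)⁻¹ ≤ A * ((2:ℝ) ^ M)⁻¹ ^ k := by
      have h5 : 2 ^ k * R ≤ 2 * κ * (1 + |t|) := by
        have : |t - c| ≤ |t| + |c| := abs_sub _ _
        have hc0 := abs_nonneg c
        have : R + |t - c| ≤ κ * (1 + |t|) := by rw [hκ]; nlinarith [mul_nonneg hR.le h0, mul_nonneg hc0 h0]
        linarith
      rw [hA, inv_pow, ← pow_mul, mul_comm M k, pow_mul, ← inv_pow, ← inv_pow, ← mul_pow]
      gcongr
      rw [← div_eq_mul_inv, div_div, inv_eq_one_div, div_le_div_iff₀ (by positivity) (by positivity)]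
      linarith
    gcongr
  refine lt_of_le_of_lt (lintegral_mono hpt) ?_
  rw [lintegral_tsum (f := fun k : ℕ => (Metric.closedBall c (2 ^ k * R)).indicator
      (fun t => ENNReal.ofReal (A * ((2:ℝ) ^ M)⁻¹ ^ k) * (1 + ‖h t‖ₑ ^ 2))) (fun k => ((measurable_const.mul (measurable_const.add (hm.enorm.pow_const 2))).indicator
    Metric.isClosed_closedBall.measurableSet).aemeasurable)]
  have hterm : ∀ k : ℕ, ∫⁻ t, (Metric.closedBall c (2 ^ k * R)).indicator
      (fun t => ENNReal.ofReal (A * ((2:ℝ) ^ M)⁻¹ ^ k) * (1 + ‖h t‖ₑ ^ 2)) t ≤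
      ENNReal.ofReal (A * (2 * R + K) * (1 / 2) ^ k) := by
    intro k
    rw [lintegral_indicator Metric.isClosed_closedBall.measurableSet, lintegral_const_mul' _ _ ENNReal.ofReal_ne_top,
      lintegral_add_left measurable_const, lintegral_const, Measure.restrict_apply_univ, Real.volume_closedBall, one_mul]
    calc _ ≤ ENNReal.ofReal (A * ((2:ℝ) ^ M)⁻¹ ^ k) * (ENNReal.ofReal (2 * (2 ^ k * R)) + ENNReal.ofReal (K * (2 ^ n) ^ k)) := by
          gcongr; exact hg k
      _ = ENNReal.ofReal ((A * ((2:ℝ) ^ M)⁻¹ ^ k) * (2 * (2 ^ k * R) + K * (2 ^ n) ^ k)) := by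
          rw [← ENNReal.ofReal_add (by positivity) (by positivity), ← ENNReal.ofReal_mul (by positivity)]
      _ ≤ _ := by
          apply ENNReal.ofReal_le_ofReal
          have hb : (2:ℝ) * (2 ^ k * R) + K * (2 ^ n) ^ k ≤ (2 * R + K) * (2 ^ (n + 1)) ^ k := by
            have b1 : (2:ℝ) ^ k ≤ (2 ^ (n + 1)) ^ k := by
              gcongr; exact le_self_pow₀ (by norm_num) (by omega)
            have b2 : ((2:ℝ) ^ n) ^ k ≤ (2 ^ (n + 1)) ^ k := by
              gcongr
              · norm_num
              · omega
            nlinarith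
          calc _ ≤ (A * ((2:ℝ) ^ M)⁻¹ ^ k) * ((2 * R + K) * (2 ^ (n + 1)) ^ k) := by gcongr
            _ = A * (2 * R + K) * (((2:ℝ) ^ M)⁻¹ * 2 ^ (n + 1)) ^ k := by rw [mul_pow]; ring
            _ = _ := by
              congr 2
              rw [hM, show n + 2 = (n + 1) + 1 by ring, pow_succ (2:ℝ) (n + 1)]; field_simp
  refine lt_of_le_of_lt (ENNReal.tsum_le_tsum hterm) ?_
  have hsum : Summable fun k : ℕ => A * (2 * R + K) * (1 / 2 : ℝ) ^ k :=
    (summable_geometric_of_lt_one (by norm_num) (by norm_num)).mul_left _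
  rw [← ENNReal.ofReal_tsum_of_nonneg (fun k => by positivity) hsum]
  exact ENNReal.ofReal_lt_top

theorem sharp_extract {i : ℕ} {s p : ℝ} (hp : 2 ≤ p) {f : ℝ → ℂ} {x M : ℝ} (hM : 0 < M)
    (h : sharpMax i s p (fun _ : Fin 1 => f) x < ENNReal.ofReal M) {c ρ : ℝ} (hρ : 0 < ρ)
    (hx : x ∈ Metric.closedBall c ρ) : ∃ P : Polynomial ℂ, P.degree < (i : WithBot ℕ) ∧
      ∫⁻ t in Metric.closedBall c ρ, ENNReal.ofReal ((‖f t - P.eval (t:ℂ)‖ ^ 2) ^ (p / 2)) ≤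
        ENNReal.ofReal (2 * ρ * ((2 * ρ) ^ s * M) ^ p) := by
  rw [Real.closedBall_eq_Icc] at hx ⊢
  unfold sharpMax at h
  have h1 := lt_of_le_of_lt (le_iSup₂_of_le (c - ρ) (c + ρ) (le_iSup₂_of_le (by linarith) hx le_rfl)) h
  simp only [iInf_lt_iff] at h1
  obtain ⟨P, hP, h2⟩ := h1
  refine ⟨P 0, hP 0, ?_⟩
  simp only [Finset.univ_unique, Fin.default_eq_zero, Finset.sum_singleton] at h2
  set J := ∫⁻ t in Icc (c - ρ) (c + ρ), ENNReal.ofReal ((‖f t - (P 0).eval (t:ℂ)‖ ^ 2) ^ (p / 2)) with hJ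
  rw [show c + ρ - (c - ρ) = 2 * ρ by ring] at h2
  have hρ2 : 0 < 2 * ρ := by positivity
  have hp0 : 0 < p := by linarith
  have h3 := h2.le
  rw [ENNReal.rpow_neg, ENNReal.ofReal_rpow_of_pos hρ2,
    ENNReal.inv_mul_le_iff (by rw [Ne, ENNReal.ofReal_eq_zero, not_le]; positivity) ENNReal.ofReal_ne_top,
    one_div, ENNReal.rpow_inv_le_iff hp0, ← ENNReal.ofReal_mul (by positivity),
    ENNReal.ofReal_rpow_of_pos (by positivity),
    ENNReal.inv_mul_le_iff (by rw [Ne, ENNReal.ofReal_eq_zero, not_le]; positivity) ENNReal.ofReal_ne_top,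
    ← ENNReal.ofReal_mul (by positivity)] at h3
  exact h3

theorem sharp_build {i : ℕ} {s p : ℝ} (hp : 2 ≤ p) {N : ℕ} {h : Fin N → ℝ → ℂ} {x K : ℝ} (hK : 0 < K)
    (hh : ∀ c r : ℝ, 0 < r → x ∈ Metric.closedBall c r → ∃ P : Fin N → Polynomial ℂ,
      (∀ m, (P m).degree < (i : WithBot ℕ)) ∧
      ∫⁻ t in Metric.closedBall c r, ENNReal.ofReal ((∑ m, ‖h m t - (P m).eval (t : ℂ)‖ ^ 2) ^ (p / 2)) ≤
        ENNReal.ofReal (2 * r * ((2 * r) ^ s * K) ^ p)) :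
    sharpMax i s p h x ≤ ENNReal.ofReal K := by
  unfold sharpMax
  refine iSup₂_le fun u v => iSup₂_le fun huv hx => ?_
  have hball : Metric.closedBall ((u + v) / 2) ((v - u) / 2) = Icc u v := by
    rw [Real.closedBall_eq_Icc]; congr 1 <;> ring
  obtain ⟨P, hP, hI⟩ := hh ((u + v) / 2) ((v - u) / 2) (by linarith) (by rw [hball]; exact hx)
  refine iInf₂_le_of_le P hP ?_
  rw [hball, show 2 * ((v - u) / 2) = v - u by ring] at hI
  have hL : 0 < v - u := by linarith
  rw [ENNReal.rpow_neg, ENNReal.ofReal_rpow_of_pos hL,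
    ENNReal.inv_mul_le_iff (by rw [Ne, ENNReal.ofReal_eq_zero, not_le]; positivity) ENNReal.ofReal_ne_top,
    one_div, ENNReal.rpow_inv_le_iff (by linarith), ← ENNReal.ofReal_mul (by positivity),
    ENNReal.ofReal_rpow_of_pos (by positivity),
    ENNReal.inv_mul_le_iff (by rw [Ne, ENNReal.ofReal_eq_zero, not_le]; positivity) ENNReal.ofReal_ne_top,
    ← ENNReal.ofReal_mul (by positivity)]
  exact hI

theorem sq_rpow_half {y p : ℝ} (hy : 0 ≤ y) : (y ^ 2) ^ (p / 2) = y ^ p := by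
  rw [← Real.rpow_natCast, ← Real.rpow_mul hy]; congr 1; push_cast; ring

theorem l2_of_lp {p : ℝ} (hp : 2 ≤ p) {g : ℝ → ℂ} {c ρ E : ℝ} (hρ : 0 < ρ) (hE : 0 < E)
    (h : ∫⁻ t in Metric.closedBall c ρ, ENNReal.ofReal ((‖g t‖ ^ 2) ^ (p / 2)) ≤ ENNReal.ofReal (2 * ρ * E ^ p)) :
    ∫⁻ t in Metric.closedBall c ρ, ‖g t‖ₑ ^ 2 ≤ ENNReal.ofReal (4 * ρ * E ^ 2) := by
  calc _ ≤ ∫⁻ t in Metric.closedBall c ρ, (ENNReal.ofReal (E ^ 2) +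
        ENNReal.ofReal (E ^ 2 / E ^ p) * ENNReal.ofReal ((‖g t‖ ^ 2) ^ (p / 2))) := by
        refine lintegral_mono fun t => ?_
        rw [← ofReal_norm, ← ENNReal.ofReal_pow (norm_nonneg _), ← ENNReal.ofReal_mul (by positivity),
          ← ENNReal.ofReal_add (by positivity) (by positivity)]
        apply ENNReal.ofReal_le_ofReal
        rw [sq_rpow_half (norm_nonneg _)]
        set y := ‖g t‖ / E with hy
        have hy0 : 0 ≤ y := by positivity
        have hg : ‖g t‖ = E * y := by rw [hy]; field_simp
        have h1 : y ^ 2 ≤ 1 + y ^ p := by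
          rcases le_total y 1 with h | h
          · have : y ^ 2 ≤ 1 := pow_le_one₀ hy0 h
            have : 0 ≤ y ^ p := by positivity
            linarith
          · have : y ^ (2:ℝ) ≤ y ^ p := Real.rpow_le_rpow_of_exponent_le h hp
            rw [Real.rpow_two] at this
            linarith
        rw [hg, Real.mul_rpow hE.le hy0]
        have hEp : 0 < E ^ p := by positivity
        calc (E * y) ^ 2 = E ^ 2 * y ^ 2 := by ring
          _ ≤ E ^ 2 * (1 + y ^ p) := by gcongr
          _ = _ := by field_simp
    _ = ENNReal.ofReal (E ^ 2) * ENNReal.ofReal (2 * ρ) +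
        ENNReal.ofReal (E ^ 2 / E ^ p) * ∫⁻ t in Metric.closedBall c ρ, ENNReal.ofReal ((‖g t‖ ^ 2) ^ (p / 2)) := by
        rw [lintegral_add_left measurable_const, lintegral_const, Measure.restrict_apply_univ, Real.volume_closedBall,
          lintegral_const_mul' _ _ ENNReal.ofReal_ne_top]
    _ ≤ ENNReal.ofReal (E ^ 2) * ENNReal.ofReal (2 * ρ) + ENNReal.ofReal (E ^ 2 / E ^ p) * ENNReal.ofReal (2 * ρ * E ^ p) := by
        gcongr
    _ = _ := by
        have hEp : 0 < E ^ p := by positivity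
        rw [← ENNReal.ofReal_mul (by positivity), ← ENNReal.ofReal_mul (by positivity),
          ← ENNReal.ofReal_add (by positivity) (by positivity)]
        congr 1; field_simp; ring

theorem sharp_core (i : ℕ) (hi : 1 ≤ i) (s p : ℝ) (hs0 : 0 ≤ s) (hsi : s < i) (hp : 2 ≤ p) : ∃ C : ℝ, 0 < C ∧
    ∀ (f : ℝ → ℂ) (_ : Measurable f) (x M : ℝ) (_ : 0 < M)
    (_ : sharpMax i s p (fun _ : Fin 1 => f) x < ENNReal.ofReal M) (c r : ℝ) (_ : 0 < r)
    (_ : x ∈ Metric.closedBall c r), ∃ P : Polynomial ℂ, P.degree < (i : WithBot ℕ) ∧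
      Tame (fun t => f t - P.eval (t:ℂ)) ∧
      ∫⁻ t in Metric.closedBall c (2 * r), ENNReal.ofReal ((‖f t - P.eval (t:ℂ)‖ ^ 2) ^ (p / 2)) ≤
        ENNReal.ofReal (4 * r * ((4 * r) ^ s * M) ^ p) ∧
      ∀ k : ℕ, ∫⁻ t in Metric.closedBall c (2 ^ (k + 1) * r), ‖f t - P.eval (t:ℂ)‖ₑ ^ 2 ≤
        ENNReal.ofReal (2 ^ k * r * (C * ((k + 1) * (max (2 ^ s) (2 ^ (i - 1))) ^ k * ((4 * r) ^ s * M))) ^ 2) := by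
  obtain ⟨C, hC, hgr⟩ := poly_growth i hi (2 ^ s) (Real.one_le_rpow (by norm_num) hs0)
  refine ⟨4 * C, by positivity, ?_⟩
  intro f hf x M hM hsh c r hr hx
  set w : ℝ := 2 ^ s with hw
  set β := max w (2 ^ (i - 1)) with hβ
  have hball : ∀ k : ℕ, x ∈ Metric.closedBall c (2 ^ k * (2 * r)) := by
    intro k
    refine Metric.closedBall_subset_closedBall ?_ hx
    have : (1:ℝ) ≤ 2 ^ k := one_le_pow₀ (by norm_num)
    nlinarith
  choose P hPd hP using fun k : ℕ => sharp_extract hp hM hsh (by positivity) (hball k)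
  have hpow : ∀ k : ℕ, (2 * (2 ^ k * (2 * r))) ^ s = w ^ k * (4 * r) ^ s := by
    intro k
    rw [show 2 * (2 ^ k * (2 * r)) = 2 ^ k * (4 * r) by ring, Real.mul_rpow (by positivity) (by positivity),
      hw, Real.rpow_pow_comm (by norm_num)]
  have hr4 : 0 < (4 * r) ^ s := by positivity
  have hw0 : 0 < w := by positivity
  have hβ0 : 0 < β := lt_max_of_lt_left hw0
  set E := (4 * r) ^ s * M with hE
  have hE0 : 0 < E := by positivity
  have hL2 : ∀ k : ℕ, ∫⁻ t in Metric.closedBall c (2 ^ k * (2 * r)), ‖f t - (P k).eval (t:ℂ)‖ₑ ^ 2 ≤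
      ENNReal.ofReal (2 ^ k * (2 * r) * (w ^ k * (2 * E)) ^ 2) := by
    intro k
    have := hP k
    rw [hpow k] at this
    refine (l2_of_lp hp (by positivity) (by positivity) this).trans (le_of_eq ?_)
    congr 1; rw [hE]; ring
  have hg := hgr f hf c (2 * r) (2 * E) (by positivity) (by positivity) P hPd hL2
  have hPm : Measurable fun t : ℝ => (P 0).eval (t:ℂ) := ((P 0).continuous.comp Complex.continuous_ofReal).measurable
  refine ⟨P 0, hPd 0, ?_, ?_, ?_⟩
  · have hβi : β ≤ 2 ^ i := by
      apply max_le
      · rw [hw, ← Real.rpow_natCast]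
        exact Real.rpow_le_rpow_of_exponent_le (by norm_num) hsi.le
      · exact pow_le_pow_right₀ (by norm_num) (by omega)
    refine tame_of_growth (hf.sub hPm) (c := c) (R := 2 * r) (K := 2 * r * (C * (2 * E)) ^ 2) (by positivity) (by positivity) (3 + 2 * i) fun k => ?_
    refine (hg k).trans (ENNReal.ofReal_le_ofReal ?_)
    have hk : ((k:ℝ) + 1) ≤ 2 ^ k := by exact_mod_cast Nat.lt_two_pow_self
    calc _ ≤ 2 ^ k * (2 * r) * (C * (2 ^ k * (2 ^ i) ^ k * (2 * E))) ^ 2 := by gcongr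
      _ = 2 * r * (C * (2 * E)) ^ 2 * (2 ^ k * 2 ^ k * 2 ^ k * ((2 ^ i) ^ k * (2 ^ i) ^ k)) := by ring
      _ = _ := by
        congr 1
        rw [← mul_pow, ← mul_pow, ← mul_pow, ← mul_pow]
        congr 1
        rw [pow_add, pow_mul']; ring
  · have := hP 0
    rw [hpow 0] at this
    simp only [pow_zero, one_mul] at this
    refine this.trans (le_of_eq ?_)
    congr 1; ring
  · intro k
    have h1 := hg k
    rw [show 2 ^ k * (2 * r) = 2 ^ (k + 1) * r by ring] at h1
    refine h1.trans (ENNReal.ofReal_le_ofReal ?_)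
    have : 2 ^ (k + 1) * r * (C * ((k + 1) * β ^ k * (2 * E))) ^ 2 = 2 ^ k * r * (C * ((k + 1) * β ^ k * E)) ^ 2 * 8 := by ring
    rw [this]
    have h2 : 2 ^ k * r * (4 * C * ((k + 1) * β ^ k * E)) ^ 2 = 2 ^ k * r * (C * ((k + 1) * β ^ k * E)) ^ 2 * 16 := by ring
    rw [h2]
    gcongr
    norm_num

theorem series_bound {i : ℕ} (hi : 1 ≤ i) {s : ℝ} (hsi : s < i) : ∃ Θ : ℝ, 0 < Θ ∧ ∀ K : ℕ,
    ∑ k ∈ Finset.range K, ((2:ℝ) ^ (k * i))⁻¹ * ((k + 1) * (max ((2:ℝ) ^ s) (2 ^ (i - 1))) ^ k) ≤ Θ := by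
  set β := max ((2:ℝ) ^ s) (2 ^ (i - 1)) with hβ
  have hβ0 : 0 < β := lt_max_of_lt_left (by positivity)
  have hβi : β < 2 ^ i := by
    apply max_lt
    · rw [← Real.rpow_natCast]
      exact Real.rpow_lt_rpow_of_exponent_lt (by norm_num) hsi
    · exact pow_lt_pow_right₀ (by norm_num) (by omega)
  set θ := β / 2 ^ i with hθ
  have hθ0 : 0 < θ := by positivity
  have hθ1 : θ < 1 := by rw [hθ, div_lt_one (by positivity)]; exact hβi
  have hsum : Summable fun k : ℕ => ((k:ℝ) + 1) * θ ^ k := by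
    have h1 := summable_pow_mul_geometric_of_norm_lt_one (R := ℝ) 1 (r := θ) (by rw [Real.norm_of_nonneg hθ0.le]; exact hθ1)
    have h2 := summable_geometric_of_lt_one hθ0.le hθ1
    refine (h1.add h2).congr fun k => ?_
    ring
  have heq : ∀ k : ℕ, ((2:ℝ) ^ (k * i))⁻¹ * ((k + 1) * β ^ k) = ((k:ℝ) + 1) * θ ^ k := by
    intro k
    rw [hθ, div_pow, ← pow_mul, mul_comm i k]; ring
  refine ⟨∑' k : ℕ, ((k:ℝ) + 1) * θ ^ k + 1, ?_, fun K => ?_⟩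
  · have : 0 ≤ ∑' k : ℕ, ((k:ℝ) + 1) * θ ^ k := tsum_nonneg fun k => by positivity
    linarith
  · simp_rw [heq]
    have := hsum.sum_le_tsum (Finset.range K) (fun k _ => by positivity)
    linarith

theorem goodS_of_support (φ : 𝓢(ℝ, ℂ)) (hφ : Function.support (𝓕 ⇑φ) ⊆ Set.Ioo 0 1) : GoodS φ := by
  intro ξ hξ
  rw [SchwartzMap.fourier_coe]
  by_contra hne
  exact hξ (hφ hne)

theorem phim_eq_modS (φ : 𝓢(ℝ, ℂ)) (a b : ℝ) (h : 0 < b - a) (y : ℝ) :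
    phim ⇑φ a b y = ((b - a : ℝ) : ℂ) * modS φ a (b - a) h y := by
  rw [modS_apply, phim, mul_assoc]

theorem rotConv_eq_Vop (φ : 𝓢(ℝ, ℂ)) {N : ℕ} (a b : Fin N → ℝ) (h : ∀ m, 0 < b m - a m) (f : ℝ → ℂ) (x : ℝ)
    (m : Fin N) : rotConv ⇑φ (a m) (b m) f x = Vop φ a (fun m => b m - a m) h f 0 x m := by
  rw [Vop_coord, rotConv, conv, cv]
  congr 1
  rw [← integral_const_mul]
  refine integral_congr_ae (Filter.Eventually.of_forall fun t => ?_)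
  beta_reduce
  rw [phim_eq_modS φ _ _ (h m)]
  simp only [Function.iterate_zero, id_eq, zero_add, pow_one]
  ring

theorem Vop_poly (φ : 𝓢(ℝ, ℂ)) (hφ : GoodS φ) {N : ℕ} (a ℓ : Fin N → ℝ) (hℓ : ∀ m, 0 < ℓ m)
    (h0 : ∀ m, (0:ℝ) ∉ Ioo (a m) (a m + ℓ m)) (P : Polynomial ℂ) (x : ℝ) :
    Vop φ a ℓ hℓ (fun t => P.eval (t:ℂ)) 0 x = 0 := by
  ext m
  rw [Vop_coord, cv]
  simp only [Function.iterate_zero, id_eq]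
  rw [poly_conv_modS φ (a m) (ℓ m) (hℓ m) hφ (h0 m)]
  simp

theorem rpow_add_le {x y p : ℝ} (hx : 0 ≤ x) (hy : 0 ≤ y) (hp : 2 ≤ p) :
    (x + y) ^ p ≤ 2 ^ p * (x ^ p + y ^ p) := by
  have hp0 : 0 ≤ p := by linarith
  have hxp : 0 ≤ x ^ p := by positivity
  have hyp : 0 ≤ y ^ p := by positivity
  rcases le_total x y with h | h
  · calc (x + y) ^ p ≤ (2 * y) ^ p := Real.rpow_le_rpow (by positivity) (by linarith) hp0
      _ = 2 ^ p * y ^ p := Real.mul_rpow (by norm_num) hy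
      _ ≤ _ := by gcongr; linarith
  · calc (x + y) ^ p ≤ (2 * x) ^ p := Real.rpow_le_rpow (by positivity) (by linarith) hp0
      _ = 2 ^ p * x ^ p := Real.mul_rpow (by norm_num) hx
      _ ≤ _ := by gcongr; linarith

theorem main_est (φ : 𝓢(ℝ, ℂ)) (hφ : GoodS φ) (p : ℝ) (hp : 2 ≤ p) (i : ℕ) (hi : 1 ≤ i) (s : ℝ) (hs0 : 0 ≤ s)
    (hsi : s < i) : ∃ C : ℝ, 0 < C ∧
    ∀ (N : ℕ) (a ℓ : Fin N → ℝ) (hℓ : ∀ m, 0 < ℓ m)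
    (_ : ∀ m n, m ≠ n → Disjoint (Icc (a m) (a m + ℓ m)) (Icc (a n) (a n + ℓ n)))
    (_ : ∀ m, (0:ℝ) ∉ Ioo (a m) (a m + ℓ m))
    (f : ℝ → ℂ) (_ : Measurable f) (x M : ℝ) (_ : 0 < M)
    (_ : sharpMax i s p (fun _ : Fin 1 => f) x < ENNReal.ofReal M),
    sharpMax i s p (fun m t => Vop φ a ℓ hℓ f 0 t m) x ≤ ENNReal.ofReal (C * M) := by
  obtain ⟨C1, hC1, hcore⟩ := sharp_core i hi s p hs0 hsi hp
  obtain ⟨C2, hC2, hlp⟩ := Vop_lp φ hφ p hp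
  obtain ⟨C3, hC3, hfar⟩ := far_lemma φ hφ i hi
  obtain ⟨Θ, hΘ, hser⟩ := series_bound hi hsi
  have hp0 : 0 < p := by linarith
  set C4 := C3 * (C1 * Θ) * 2 ^ s with hC4
  have hC40 : 0 < C4 := by positivity
  set B := 2 ^ p * (2 * C2 * (2 ^ s) ^ p + C4 ^ p) with hB
  have hB0 : 0 < B := by positivity
  refine ⟨B ^ (1 / p), by positivity, ?_⟩
  intro N a ℓ hℓ hd h0 f hf x M hM hsh
  refine sharp_build hp (by positivity) fun c r hr hx => ?_
  obtain ⟨P0, hP0d, hT, hLp, hgr⟩ := hcore f hf x M hM hsh c r hr hx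
  set h : ℝ → ℂ := fun t => f t - P0.eval (t:ℂ) with hh
  have hQm : MeasurableSet (Metric.closedBall c (2 * r)) := Metric.isClosed_closedBall.measurableSet
  set Q := Metric.closedBall c (2 * r) with hQ
  have h1 := hT.indicator hQm
  have h2 := hT.indicator hQm.compl
  set e := (4 * r) ^ s * M with he
  have he0 : 0 < e := by positivity
  have hV : ∀ t, Vop φ a ℓ hℓ f 0 t = Vop φ a ℓ hℓ (Q.indicator h) 0 t + Vop φ a ℓ hℓ (Qᶜ.indicator h) 0 t := by
    intro t
    have e1 : Vop φ a ℓ hℓ f 0 t = Vop φ a ℓ hℓ (fun t => h t + P0.eval (t:ℂ)) 0 t := by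
      congr 1; ext t; simp [hh]
    rw [e1, Vop_add φ a ℓ hℓ hT (tame_poly P0), Vop_poly φ hφ a ℓ hℓ h0, add_zero, ← Vop_add φ a ℓ hℓ h1 h2]
    congr 1
    ext t
    by_cases ht : t ∈ Q <;> simp [ht]
  obtain ⟨P, hPd, hP⟩ := hfar N a ℓ hℓ hd _ h2 c r hr
    (fun k => C1 * ((k + 1) * (max (2 ^ s) (2 ^ (i - 1))) ^ k * e)) (fun k => by positivity) (C1 * Θ * e)
    (fun t ht => by simp [hQ, ht])
    (fun k => by
      refine le_trans (lintegral_mono fun t => ?_) (hgr k)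
      by_cases ht : t ∈ Q <;> simp [ht, hh])
    (fun K => by
      calc _ = C1 * (∑ k ∈ Finset.range K, ((2:ℝ) ^ (k * i))⁻¹ * ((k + 1) * (max ((2:ℝ) ^ s) (2 ^ (i - 1))) ^ k)) * e := by
            rw [Finset.mul_sum, Finset.sum_mul]
            refine Finset.sum_congr rfl fun k _ => by ring
        _ ≤ _ := by gcongr; exact hser K)
  refine ⟨P, hPd, ?_⟩
  have hloc2 : ∫⁻ t, ‖Q.indicator h t‖ₑ ^ 2 < ∞ := by
    rw [lintegral_indicator_sq hQm]
    have := hgr 0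
    simp only [zero_add, pow_one] at this
    exact this.trans_lt ENNReal.ofReal_lt_top
  have hloc : ∫⁻ t, ENNReal.ofReal ((‖Vop φ a ℓ hℓ (Q.indicator h) 0 t‖ ^ 2) ^ (p / 2)) ≤
      ENNReal.ofReal C2 * ENNReal.ofReal (4 * r * e ^ p) := by
    refine (hlp N a ℓ hℓ hd _ h1 hloc2).trans ?_
    gcongr
    refine le_trans (le_of_eq ?_) hLp
    rw [← lintegral_indicator hQm]
    refine lintegral_congr fun t => ?_
    by_cases ht : t ∈ Q
    · simp [ht, hh]
    · have : (0:ℝ) ^ (p / 2) = 0 := Real.zero_rpow (by positivity)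
      simp [ht, this]
  have hS0 : 0 ≤ C3 * (C1 * Θ * e) := by positivity
  calc _ ≤ ∫⁻ t in Metric.closedBall c r, ENNReal.ofReal (2 ^ p) *
        (ENNReal.ofReal ((‖Vop φ a ℓ hℓ (Q.indicator h) 0 t‖ ^ 2) ^ (p / 2)) + ENNReal.ofReal ((C3 * (C1 * Θ * e)) ^ p)) := by
        refine setLIntegral_mono' Metric.isClosed_closedBall.measurableSet fun t ht => ?_
        have hn : ∑ m, ‖Vop φ a ℓ hℓ f 0 t m - (P m).eval (t:ℂ)‖ ^ 2 =
            ‖Vop φ a ℓ hℓ f 0 t - WithLp.toLp 2 (fun m => (P m).eval (t:ℂ))‖ ^ 2 := by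
          rw [EuclideanSpace.norm_sq_eq]; simp
        rw [hn, sq_rpow_half (norm_nonneg _), sq_rpow_half (norm_nonneg _),
          ← ENNReal.ofReal_add (by positivity) (by positivity), ← ENNReal.ofReal_mul (by positivity)]
        apply ENNReal.ofReal_le_ofReal
        refine le_trans ?_ (rpow_add_le (norm_nonneg _) hS0 hp)
        refine Real.rpow_le_rpow (norm_nonneg _) ?_ hp0.le
        rw [hV t, add_sub_assoc]
        refine (norm_add_le _ _).trans ?_
        gcongr
        exact hP t ht
    _ = ENNReal.ofReal (2 ^ p) * ((∫⁻ t in Metric.closedBall c r, ENNReal.ofReal ((‖Vop φ a ℓ hℓ (Q.indicator h) 0 t‖ ^ 2) ^ (p / 2)))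
        + ENNReal.ofReal ((C3 * (C1 * Θ * e)) ^ p) * ENNReal.ofReal (2 * r)) := by
        rw [lintegral_const_mul' _ _ ENNReal.ofReal_ne_top, lintegral_add_right _ measurable_const, lintegral_const,
          Measure.restrict_apply_univ, Real.volume_closedBall]
    _ ≤ ENNReal.ofReal (2 ^ p) * (ENNReal.ofReal C2 * ENNReal.ofReal (4 * r * e ^ p)
        + ENNReal.ofReal ((C3 * (C1 * Θ * e)) ^ p) * ENNReal.ofReal (2 * r)) := by
        gcongr
        exact (setLIntegral_le_lintegral _ _).trans hloc
    _ = ENNReal.ofReal (2 ^ p * (C2 * (4 * r * e ^ p) + (C3 * (C1 * Θ * e)) ^ p * (2 * r))) := by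
        rw [← ENNReal.ofReal_mul hC2.le, ← ENNReal.ofReal_mul (by positivity), ← ENNReal.ofReal_add (by positivity) (by positivity),
          ← ENNReal.ofReal_mul (by positivity)]
    _ = _ := by
        congr 1
        have e1 : e = 2 ^ s * ((2 * r) ^ s * M) := by
          rw [he, show 4 * r = 2 * (2 * r) by ring, Real.mul_rpow (by norm_num) (by positivity), mul_assoc]
        have e2 : C3 * (C1 * Θ * e) = C4 * ((2 * r) ^ s * M) := by rw [e1, hC4]; ring
        have e3 : (2 * r) ^ s * (B ^ (1 / p) * M) = B ^ (1 / p) * ((2 * r) ^ s * M) := by ring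
        have hy : 0 ≤ (2 * r) ^ s * M := by positivity
        rw [e2, e3, e1, Real.mul_rpow (by positivity) hy, Real.mul_rpow (by positivity) hy, Real.mul_rpow (by positivity) hy,
          ← Real.rpow_mul hB0.le, one_div, inv_mul_cancel₀ hp0.ne', Real.rpow_one, hB]
        ring

/-- pointwise estimate for the rotated family in terms of the sharp maximal
function: for `2 ≤ p < ∞`, `i ≥ 1`, `s ∈ [0,i)` there is `C > 0` (depending only on `φ, p, i, s`)
such that for every admissible collection and every measurable `f` with `M^{i,s}_p f` finite at
at least one point, the convolutions `f∗φ_m` converge absolutely and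
`M^{i,s}_p (g) ≤ C M^{i,s}_p f` pointwise, where `g_m(x) = e^{-2πi a_m x}(f∗φ_m)(x)`. -/
theorem statement12 (φ : SchwartzMap ℝ ℂ)
    (hφ : Function.support (𝓕 ⇑φ) ⊆ Set.Ioo 0 1)
    (p : ℝ) (hp : 2 ≤ p) (i : ℕ) (hi : 1 ≤ i) (s : ℝ) (hs0 : 0 ≤ s) (hsi : s < i) :
    ∃ C : ℝ, 0 < C ∧ ∀ (N : ℕ) (a b : Fin N → ℝ), Admissible a b →
      ∀ f : ℝ → ℂ, Measurable f →
        (∃ x₀ : ℝ, sharpMax i s p (fun _ : Fin 1 => f) x₀ < ∞) →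
        (∀ (m : Fin N) (x : ℝ), Integrable fun t => f t * phim ⇑φ (a m) (b m) (x - t)) ∧
          ∀ x : ℝ, sharpMax i s p (fun m : Fin N => rotConv ⇑φ (a m) (b m) f) x
            ≤ ENNReal.ofReal C * sharpMax i s p (fun _ : Fin 1 => f) x := by
  have hg := goodS_of_support φ hφ
  obtain ⟨C, hC, hmain⟩ := main_est φ hg p hp i hi s hs0 hsi
  obtain ⟨C1, hC1, hcore⟩ := sharp_core i hi s p hs0 hsi hp
  refine ⟨C, hC, ?_⟩
  intro N a b hadm f hf hex
  obtain ⟨hab, hzero, hdis⟩ := hadm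
  have hℓ : ∀ m, 0 < b m - a m := fun m => sub_pos.2 (hab m)
  have hfin : ∀ x ε : ℝ, 0 < ε → sharpMax i s p (fun _ : Fin 1 => f) x < ∞ →
      sharpMax i s p (fun _ : Fin 1 => f) x <
        ENNReal.ofReal ((sharpMax i s p (fun _ : Fin 1 => f) x).toReal + ε) := by
    intro x ε hε hx
    rw [ENNReal.lt_ofReal_iff_toReal_lt hx.ne]
    linarith
  constructor
  · intro m x
    obtain ⟨x₀, hx₀⟩ := hex
    obtain ⟨P, -, hT, -⟩ := hcore f hf x₀ _ (by positivity) (hfin x₀ 1 one_pos hx₀) x₀ 1 one_pos (by simp)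
    have hfT : Tame f := by
      have := hT.add (tame_poly P)
      simpa using this
    refine ((hfT.integrable (modS φ (a m) (b m - a m) (hℓ m)) x).const_mul ((b m - a m : ℝ) : ℂ)).congr
      (Filter.Eventually.of_forall fun t => ?_)
    beta_reduce
    rw [phim_eq_modS φ _ _ (hℓ m)]; ring
  · intro x
    rcases eq_or_ne (sharpMax i s p (fun _ : Fin 1 => f) x) ∞ with htop | htop
    · rw [htop, ENNReal.mul_top (by rw [Ne, ENNReal.ofReal_eq_zero, not_le]; exact hC)]
      exact le_top
    · refine ENNReal.le_of_forall_pos_le_add fun ε hε _ => ?_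
      have hε0 : (0:ℝ) < ε := by exact_mod_cast hε
      have h1 := hmain N a (fun m => b m - a m) hℓ (by simpa using hdis) (by simpa using hzero) f hf x _
        (by positivity) (hfin x (ε / C) (by positivity) (lt_top_iff_ne_top.2 htop))
      have h2 : (fun m : Fin N => rotConv ⇑φ (a m) (b m) f) = fun m t => Vop φ a (fun m => b m - a m) hℓ f 0 t m := by
        ext m t
        exact rotConv_eq_Vop φ a b hℓ f t m
      rw [h2]
      refine h1.trans (le_of_eq ?_)
      rw [mul_add, mul_div_cancel₀ _ hC.ne', ENNReal.ofReal_add (by positivity) hε0.le, ENNReal.ofReal_mul hC.le,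
        ENNReal.ofReal_toReal htop, ENNReal.ofReal_coe_nnreal]
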